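/- Let {c_ij : 1 ≤ i,j ≤ n} be an n×n array of real numbers with n ≥ 2 such that Σ_{j=1}^n c_ij = 0 for every i and Σ_{i=1}^n c_ij = 0 for every j, and suppose (1/(n−1)) Σ_{i,j=1}^n c_ij² = 1. Let π be a uniformly random permutation of {1,…,n} and W = Σ_{i=1}^n c_{iπ(i)}. Then sup_{z∈ℝ} |P(W ≤ z) − Φ(z)| ≤ (451/n) Σ_{i,j=1}^n |c_ij|³. -/

import Mathlib

open MeasureTheory ProbabilityTheory
open scoped ENNReal

/-- The standard normal cumulative distribution function `Φ`. -/
noncomputable def stdNormalCDF (z : ℝ) : ℝ := ((gaussianReal 0 1) (Set.Iic z)).toReal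

section CombinatorialCLT

open Equiv Finset

section GaussianTail

theorem integrable_exp_neg_sq_div_two : Integrable (fun t : ℝ => Real.exp (-(t ^ 2) / 2)) := by
  have h := integrable_exp_neg_mul_sq (b := (1 / 2 : ℝ)) (by norm_num)
  refine h.congr (ae_of_all _ fun t => ?_)
  exact congrArg Real.exp (by ring)

theorem integral_Ioi_exp_neg_sq_div_two_le {w : ℝ} (hw : 0 ≤ w) :
    ∫ t in Set.Ioi w, Real.exp (-(t ^ 2) / 2) ≤ √(Real.pi / 2) * Real.exp (-(w ^ 2) / 2) := by
  have hpre : (fun x : ℝ => x + w) ⁻¹' Set.Ioi w = Set.Ioi 0 := by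
    ext x; simp
  have hmp := (measurePreserving_add_right (volume : Measure ℝ) w).setIntegral_preimage_emb
    (MeasurableEquiv.addRight w).measurableEmbedding (fun t : ℝ => Real.exp (-(t ^ 2) / 2))
    (Set.Ioi w)
  rw [hpre] at hmp
  rw [← hmp]
  have hG : ∫ x in Set.Ioi (0 : ℝ), Real.exp (-(x ^ 2) / 2) = √(Real.pi / 2) := by
    have h := integral_gaussian_Ioi (1 / 2)
    have h4 : √(Real.pi / (1 / 2)) = 2 * √(Real.pi / 2) := by
      rw [show Real.pi / (1 / 2) = 2 ^ 2 * (Real.pi / 2) by ring,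
        Real.sqrt_mul (by norm_num), Real.sqrt_sq (by norm_num)]
    rw [h4] at h
    calc ∫ x in Set.Ioi (0 : ℝ), Real.exp (-(x ^ 2) / 2)
        = ∫ x in Set.Ioi (0 : ℝ), Real.exp (-(1 / 2) * x ^ 2) := by
          congr 1; ext x; congr 1; ring
      _ = _ := by rw [h]; ring
  rw [← hG, ← integral_mul_const]
  refine setIntegral_mono_on ?_ ?_ measurableSet_Ioi fun x hx => ?_
  · exact (integrable_exp_neg_sq_div_two.comp_add_right w).integrableOn
  · exact (integrable_exp_neg_sq_div_two.mul_const _).integrableOn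
  · rw [← Real.exp_add]
    apply Real.exp_le_exp.mpr
    have hx' : (0 : ℝ) < x := hx
    nlinarith [mul_nonneg hx'.le hw]

theorem mul_integral_Ioi_exp_neg_sq_div_two_le {w : ℝ} (hw : 0 ≤ w) :
    w * ∫ t in Set.Ioi w, Real.exp (-(t ^ 2) / 2) ≤ Real.exp (-(w ^ 2) / 2) := by
  have hderiv : ∀ x ∈ Set.Ioi w, HasDerivAt (fun t : ℝ => -Real.exp (-(t ^ 2) / 2))
      (x * Real.exp (-(x ^ 2) / 2)) x := fun x _ => by
    have h1 : HasDerivAt (fun t : ℝ => -(t ^ 2) / 2) (-x) x := by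
      exact ((hasDerivAt_pow 2 x).neg.div_const 2).congr_deriv (by norm_num; ring)
    exact h1.exp.neg.congr_deriv (by ring)
  have htend : Filter.Tendsto (fun t : ℝ => -Real.exp (-(t ^ 2) / 2)) Filter.atTop (nhds 0) := by
    rw [← neg_zero]
    refine (Real.tendsto_exp_atBot.comp ?_).neg
    have : Filter.Tendsto (fun t : ℝ => t ^ 2 / 2) Filter.atTop Filter.atTop :=
      (Filter.tendsto_pow_atTop (by norm_num)).atTop_div_const (by norm_num)
    refine (Filter.tendsto_neg_atTop_atBot.comp this).congr fun t => ?_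
    simp only [Function.comp]
    ring
  have hcont : ContinuousWithinAt (fun t : ℝ => -Real.exp (-(t ^ 2) / 2)) (Set.Ici w) w := by
    fun_prop
  have hpos : ∀ x ∈ Set.Ioi w, 0 ≤ x * Real.exp (-(x ^ 2) / 2) := fun x hx =>
    mul_nonneg (hw.trans (le_of_lt hx)) (Real.exp_pos _).le
  have hint := integral_Ioi_of_hasDerivAt_of_nonneg hcont hderiv hpos htend
  have hio := integrableOn_Ioi_deriv_of_nonneg hcont hderiv hpos htend
  rw [zero_sub, neg_neg] at hint
  rw [← hint, ← integral_const_mul]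
  refine setIntegral_mono_on (integrable_exp_neg_sq_div_two.const_mul w).integrableOn hio
    measurableSet_Ioi fun x hx => ?_
  exact mul_le_mul_of_nonneg_right (le_of_lt hx) (Real.exp_pos _).le

/-- Both tails of an integrable mean-zero function dominated by `exp (-t² / 2)`. -/
theorem abs_integral_Iic_le {G : ℝ → ℝ} (hG : Integrable G)
    (hb : ∀ t, |G t| ≤ Real.exp (-(t ^ 2) / 2)) (h0 : ∫ t, G t = 0) (w : ℝ) :
    |∫ t in Set.Iic w, G t| ≤ ∫ t in Set.Ioi |w|, Real.exp (-(t ^ 2) / 2) := by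
  rcases le_total 0 w with hw | hw
  · have h := intervalIntegral.integral_Iic_add_Ioi (b := w) hG.integrableOn hG.integrableOn
    rw [h0] at h
    rw [eq_neg_of_add_eq_zero_left h, abs_neg, abs_of_nonneg hw]
    refine (abs_integral_le_integral_abs).trans ?_
    exact integral_mono hG.abs.integrableOn integrable_exp_neg_sq_div_two.integrableOn hb
  · rw [abs_of_nonpos hw]
    have h := integral_comp_neg_Ioi (-w) (fun t : ℝ => Real.exp (-(t ^ 2) / 2))
    simp only [neg_neg, neg_sq] at h
    rw [h]
    refine (abs_integral_le_integral_abs).trans ?_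
    exact integral_mono hG.abs.integrableOn integrable_exp_neg_sq_div_two.integrableOn hb

theorem integral_gaussianReal_eq (h : ℝ → ℝ) :
    ∫ x, h x ∂gaussianReal 0 1
      = (√(2 * Real.pi))⁻¹ * ∫ t, h t * Real.exp (-(t ^ 2) / 2) := by
  rw [integral_gaussianReal_eq_integral_smul one_ne_zero, ← integral_const_mul]
  congr 1
  ext x
  simp [gaussianPDFReal]
  ring

/-- A solution of the Stein equation for a continuous test function with values in `[0, 1]`. -/
theorem exists_stein_solution {h : ℝ → ℝ} (hc : Continuous h) (h0 : ∀ x, 0 ≤ h x)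
    (h1 : ∀ x, h x ≤ 1) :
    ∃ f g : ℝ → ℝ, (∀ w, HasDerivAt f (g w) w) ∧
      (∀ w, g w = w * f w + (h w - ∫ x, h x ∂gaussianReal 0 1)) ∧
      (∀ w, |f w| ≤ √(Real.pi / 2)) ∧ ∀ w, |g w| ≤ 2 := by
  set N := ∫ x, h x ∂gaussianReal 0 1 with hN
  have hhi : Integrable h (gaussianReal 0 1) :=
    Integrable.of_bound hc.aestronglyMeasurable 1
      (ae_of_all _ fun x => by rw [Real.norm_eq_abs, abs_of_nonneg (h0 x)]; exact h1 x)
  have hN0 : 0 ≤ N := integral_nonneg h0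
  have hN1 : N ≤ 1 := by
    have := integral_mono hhi (integrable_const 1) h1
    simpa using this
  have hd : ∀ x, |h x - N| ≤ 1 := fun x => by
    rw [abs_le]; constructor <;> linarith [h0 x, h1 x]
  set G : ℝ → ℝ := fun t => (h t - N) * Real.exp (-(t ^ 2) / 2) with hGdef
  have hGc : Continuous G := by simp only [hGdef]; fun_prop
  have hGb : ∀ t, |G t| ≤ Real.exp (-(t ^ 2) / 2) := fun t => by
    simp only [hGdef, abs_mul, abs_of_pos (Real.exp_pos _)]
    exact mul_le_of_le_one_left (Real.exp_pos _).le (hd t)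
  have hGi : Integrable G := integrable_exp_neg_sq_div_two.mono' hGc.aestronglyMeasurable
    (ae_of_all _ hGb)
  have hG0 : ∫ t, G t = 0 := by
    have h2 : ∫ x, (h x - N) ∂gaussianReal 0 1 = 0 := by
      rw [integral_sub hhi (integrable_const N)]
      simp [hN]
    rw [integral_gaussianReal_eq] at h2
    have hne : (√(2 * Real.pi))⁻¹ ≠ 0 := by positivity
    exact (mul_eq_zero.mp h2).resolve_left hne
  set f : ℝ → ℝ := fun w => Real.exp (w ^ 2 / 2) * ∫ t in Set.Iic w, G t with hf
  have hexp : ∀ w : ℝ, Real.exp (w ^ 2 / 2) * Real.exp (-(w ^ 2) / 2) = 1 := fun w => by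
    rw [← Real.exp_add]; simp [neg_div]
  have hfb : ∀ w, |f w| ≤ Real.exp (|w| ^ 2 / 2) *
      ∫ t in Set.Ioi |w|, Real.exp (-(t ^ 2) / 2) := fun w => by
    simp only [hf, abs_mul, abs_of_pos (Real.exp_pos _), sq_abs]
    exact mul_le_mul_of_nonneg_left (abs_integral_Iic_le hGi hGb hG0 w) (Real.exp_pos _).le
  have hwf : ∀ w, |w * f w| ≤ 1 := fun w => by
    rw [abs_mul]
    calc |w| * |f w| ≤ |w| * (Real.exp (|w| ^ 2 / 2) *
          ∫ t in Set.Ioi |w|, Real.exp (-(t ^ 2) / 2)) :=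
        mul_le_mul_of_nonneg_left (hfb w) (abs_nonneg w)
      _ = Real.exp (|w| ^ 2 / 2) * (|w| * ∫ t in Set.Ioi |w|, Real.exp (-(t ^ 2) / 2)) := by ring
      _ ≤ Real.exp (|w| ^ 2 / 2) * Real.exp (-(|w| ^ 2) / 2) :=
        mul_le_mul_of_nonneg_left (mul_integral_Ioi_exp_neg_sq_div_two_le (abs_nonneg w))
          (Real.exp_pos _).le
      _ = 1 := hexp _
  refine ⟨f, fun w => w * f w + (h w - N), fun w => ?_, fun w => rfl, fun w => ?_, fun w => ?_⟩
  · have hI : HasDerivAt (fun u => ∫ t in Set.Iic u, G t) (G w) w := by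
      have h3 : HasDerivAt (fun u => (∫ t in Set.Iic (0 : ℝ), G t) + ∫ t in (0 : ℝ)..u, G t)
          (G w) w := (hGc.integral_hasStrictDerivAt 0 w).hasDerivAt.const_add _
      refine h3.congr_of_eventuallyEq (Filter.Eventually.of_forall fun u => ?_)
      have := intervalIntegral.integral_Iic_sub_Iic (a := (0 : ℝ)) (b := u)
        hGi.integrableOn hGi.integrableOn
      simp only [← this]
      ring
    have he : HasDerivAt (fun u : ℝ => Real.exp (u ^ 2 / 2)) (Real.exp (w ^ 2 / 2) * w) w := by
      have h4 : HasDerivAt (fun u : ℝ => u ^ 2 / 2) w w := by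
        exact ((hasDerivAt_pow 2 w).div_const 2).congr_deriv (by norm_num)
      exact h4.exp
    refine (he.mul hI).congr_deriv ?_
    simp only [hf, hGdef]
    linear_combination (h w - N) * hexp w
  · calc |f w| ≤ _ := hfb w
      _ ≤ Real.exp (|w| ^ 2 / 2) * (√(Real.pi / 2) * Real.exp (-(|w| ^ 2) / 2)) :=
        mul_le_mul_of_nonneg_left (integral_Ioi_exp_neg_sq_div_two_le (abs_nonneg w))
          (Real.exp_pos _).le
      _ = √(Real.pi / 2) := by linear_combination √(Real.pi / 2) * hexp |w|
  · calc |w * f w + (h w - N)| ≤ |w * f w| + |h w - N| := abs_add_le _ _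
      _ ≤ 2 := by linarith [hwf w, hd w]

end GaussianTail

section NormalCDF

theorem stdNormalCDF_nonneg (z : ℝ) : 0 ≤ stdNormalCDF z := ENNReal.toReal_nonneg

theorem stdNormalCDF_le_one (z : ℝ) : stdNormalCDF z ≤ 1 := measureReal_le_one

theorem stdNormalCDF_sub_le {a b : ℝ} (hab : a ≤ b) :
    stdNormalCDF b - stdNormalCDF a ≤ 2 / 5 * (b - a) := by
  have h1 : stdNormalCDF b - stdNormalCDF a = (gaussianReal 0 1).real (Set.Ioc a b) := by
    have := measureReal_sdiff (μ := gaussianReal 0 1) (Set.Iic_subset_Iic.mpr hab)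
      measurableSet_Iic
    rw [Set.Iic_sdiff_Iic] at this
    rw [this]; rfl
  rw [h1, measureReal_def, gaussianReal_apply_eq_integral 0 one_ne_zero, ENNReal.toReal_ofReal
    (setIntegral_nonneg measurableSet_Ioc fun x _ => gaussianPDFReal_nonneg _ _ _)]
  have hb : ∀ x ∈ Set.Ioc a b, gaussianPDFReal 0 1 x ≤ 2 / 5 := fun x _ => by
    simp only [gaussianPDFReal, NNReal.coe_one, mul_one, sub_zero]
    have h2 : (√(2 * Real.pi))⁻¹ ≤ 2 / 5 := by
      rw [inv_le_comm₀ (by positivity) (by norm_num)]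
      apply Real.le_sqrt_of_sq_le
      nlinarith [Real.pi_gt_d6]
    have h3 : Real.exp (-x ^ 2 / 2) ≤ 1 := Real.exp_le_one_iff.mpr (by nlinarith [sq_nonneg x])
    calc _ ≤ (2 / 5 : ℝ) * 1 := by gcongr
      _ = _ := mul_one _
  calc _ ≤ ∫ _ in Set.Ioc a b, (2 / 5 : ℝ) :=
        setIntegral_mono_on (integrable_gaussianPDFReal 0 1).integrableOn (by simp)
          measurableSet_Ioc hb
    _ = _ := by simp [hab, mul_comm]

theorem integral_gaussianReal_le_stdNormalCDF {h : ℝ → ℝ} (hc : Continuous h) (h0 : ∀ x, 0 ≤ h x)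
    (h1 : ∀ x, h x ≤ 1) {b : ℝ} (hb : ∀ x, b < x → h x = 0) :
    ∫ x, h x ∂gaussianReal 0 1 ≤ stdNormalCDF b := by
  have h2 : stdNormalCDF b = ∫ x, (Set.Iic b).indicator 1 x ∂gaussianReal 0 1 := by
    rw [integral_indicator_one measurableSet_Iic]; rfl
  rw [h2]
  refine integral_mono ?_ ?_ fun x => ?_
  · exact Integrable.of_bound hc.aestronglyMeasurable 1
      (ae_of_all _ fun x => by rw [Real.norm_eq_abs, abs_of_nonneg (h0 x)]; exact h1 x)
  · exact (integrable_const 1).indicator measurableSet_Iic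
  · by_cases hx : x ≤ b
    · simp [Set.indicator, hx, h1]
    · simp [Set.indicator, hx, hb x (not_le.mp hx)]

theorem stdNormalCDF_le_integral_gaussianReal {h : ℝ → ℝ} (hc : Continuous h) (h0 : ∀ x, 0 ≤ h x)
    (h1 : ∀ x, h x ≤ 1) {a : ℝ} (ha : ∀ x, x ≤ a → h x = 1) :
    stdNormalCDF a ≤ ∫ x, h x ∂gaussianReal 0 1 := by
  have h2 : stdNormalCDF a = ∫ x, (Set.Iic a).indicator 1 x ∂gaussianReal 0 1 := by
    rw [integral_indicator_one measurableSet_Iic]; rfl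
  rw [h2]
  refine integral_mono ?_ ?_ fun x => ?_
  · exact (integrable_const 1).indicator measurableSet_Iic
  · exact Integrable.of_bound hc.aestronglyMeasurable 1
      (ae_of_all _ fun x => by rw [Real.norm_eq_abs, abs_of_nonneg (h0 x)]; exact h1 x)
  · by_cases hx : x ≤ a
    · simp [Set.indicator, hx, ha x hx]
    · simp [Set.indicator, hx, h0]

end NormalCDF

section Permutations

set_option linter.unusedSectionVars false

variable {α : Type*} [Fintype α] [DecidableEq α]

/-- The mean of a function of a uniformly random permutation. -/
noncomputable def permMean (F : Perm α → ℝ) : ℝ := (∑ π, F π) / (Fintype.card α).factorial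

theorem factorial_card_pos : (0 : ℝ) < (Fintype.card α).factorial := by
  exact_mod_cast Nat.factorial_pos _

theorem permMean_add (F G : Perm α → ℝ) :
    permMean (fun π => F π + G π) = permMean F + permMean G := by
  simp only [permMean, Finset.sum_add_distrib, add_div]

theorem permMean_sub (F G : Perm α → ℝ) :
    permMean (fun π => F π - G π) = permMean F - permMean G := by
  simp only [permMean, Finset.sum_sub_distrib, sub_div]

theorem permMean_const_mul (a : ℝ) (F : Perm α → ℝ) :
    permMean (fun π => a * F π) = a * permMean F := by
  simp only [permMean, ← Finset.mul_sum, mul_div_assoc]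

theorem permMean_mul_const (a : ℝ) (F : Perm α → ℝ) :
    permMean (fun π => F π * a) = permMean F * a := by
  simp only [mul_comm _ a, permMean_const_mul]

theorem permMean_const (a : ℝ) : permMean (fun _ : Perm α => a) = a := by
  simp [permMean, Fintype.card_perm, (factorial_card_pos (α := α)).ne']

theorem permMean_sum {ι : Type*} (s : Finset ι) (F : ι → Perm α → ℝ) :
    permMean (fun π => ∑ k ∈ s, F k π) = ∑ k ∈ s, permMean (F k) := by
  simp only [permMean, ← Finset.sum_div]
  rw [Finset.sum_comm]

theorem permMean_mono {F G : Perm α → ℝ} (h : ∀ π, F π ≤ G π) : permMean F ≤ permMean G :=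
  div_le_div_of_nonneg_right (Finset.sum_le_sum fun π _ => h π) factorial_card_pos.le

theorem permMean_nonneg {F : Perm α → ℝ} (h : ∀ π, 0 ≤ F π) : 0 ≤ permMean F :=
  div_nonneg (Finset.sum_nonneg fun π _ => h π) factorial_card_pos.le

theorem abs_permMean_le (F : Perm α → ℝ) : |permMean F| ≤ permMean fun π => |F π| := by
  rw [permMean, abs_div, abs_of_pos factorial_card_pos]
  exact div_le_div_of_nonneg_right (Finset.abs_sum_le_sum_abs _ _) factorial_card_pos.le

theorem permMean_comp_mul_right (τ : Perm α) (F : Perm α → ℝ) :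
    permMean (fun π => F (π * τ)) = permMean F := by
  simp only [permMean]
  congr 1
  exact Fintype.sum_equiv (Equiv.mulRight τ) _ _ fun π => rfl

/-- A uniform permutation stays uniform after composition with an independent random one. -/
theorem permMean_average {β : Type*} [Fintype β] [DecidableEq β] (ι : Perm β → Perm α)
    (F : Perm α → ℝ) :
    permMean (fun π => permMean fun ρ => F (π * ι ρ)) = permMean F := by
  have h : permMean (fun π => permMean fun ρ => F (π * ι ρ))
      = permMean fun ρ => permMean fun π => F (π * ι ρ) := by
    simp only [permMean, ← Finset.sum_div]
    rw [Finset.sum_comm, div_right_comm]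
  rw [h]
  simp only [permMean_comp_mul_right, permMean_const]

/-- The statistic `∑ i, c i (π i)`. -/
def permSum (c : α → α → ℝ) (π : Perm α) : ℝ := ∑ i, c i (π i)

/-- An array with vanishing row and column sums. -/
structure IsCentered (c : α → α → ℝ) : Prop where
  row : ∀ i, ∑ j, c i j = 0
  col : ∀ j, ∑ i, c i j = 0

theorem sum_apply_perm (π : Perm α) (f : α → ℝ) : ∑ i, f (π i) = ∑ i, f i :=
  Equiv.sum_comp π f

/-- The loss in `permSum c π` caused by exchanging the images of `i` and `j`. -/
def swapDiff (c : α → α → ℝ) (i j : α) (π : Perm α) : ℝ :=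
  c i (π i) + c j (π j) - c i (π j) - c j (π i)

theorem permSum_mul_swap (c : α → α → ℝ) (i j : α) (π : Perm α) :
    permSum c (π * swap i j) = permSum c π - swapDiff c i j π := by
  rcases eq_or_ne i j with rfl | hij
  · simp [permSum, swapDiff]
  · rw [eq_sub_iff_add_eq, ← eq_sub_iff_add_eq', permSum, permSum, ← Finset.sum_sub_distrib,
      Fintype.sum_eq_add i j hij]
    · simp [swapDiff]; ring
    · rintro x ⟨h1, h2⟩
      simp [swap_apply_of_ne_of_ne h1 h2]

theorem swapDiff_mul_swap (c : α → α → ℝ) (i j : α) (π : Perm α) :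
    swapDiff c i j (π * swap i j) = -swapDiff c i j π := by
  simp [swapDiff]; ring

theorem sum_swapDiff {c : α → α → ℝ} (hc : IsCentered c) (π : Perm α) :
    ∑ i, ∑ j, swapDiff c i j π = 2 * Fintype.card α * permSum c π := by
  have h1 : ∀ i, ∑ j, c i (π j) = 0 := fun i => by rw [sum_apply_perm π (c i), hc.row]
  have h2 : ∑ i, ∑ j, c j (π i) = 0 := by
    rw [Finset.sum_comm]; simp [h1]
  simp only [swapDiff, Finset.sum_sub_distrib, Finset.sum_add_distrib, h1, h2]
  simp only [permSum, Finset.sum_const, Finset.card_univ, nsmul_eq_mul, ← Finset.mul_sum]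
  ring

/-- The exchangeable-pair identity for `permSum`. -/
theorem stein_identity {c : α → α → ℝ} (hc : IsCentered c) (f : ℝ → ℝ) :
    4 * Fintype.card α * permMean (fun π => permSum c π * f (permSum c π))
      = ∑ i, ∑ j, permMean fun π =>
          swapDiff c i j π * (f (permSum c π) - f (permSum c π - swapDiff c i j π)) := by
  have h1 : ∀ i j, permMean (fun π =>
      swapDiff c i j π * (f (permSum c π) - f (permSum c π - swapDiff c i j π)))
      = 2 * permMean fun π => swapDiff c i j π * f (permSum c π) := fun i j => by
    have h := permMean_comp_mul_right (swap i j) fun π => swapDiff c i j π * f (permSum c π)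
    simp only [swapDiff_mul_swap, permSum_mul_swap] at h
    simp only [mul_sub]
    rw [permMean_sub, two_mul, sub_eq_add_neg]
    congr 1
    rw [← h, ← neg_one_mul, ← permMean_const_mul]
    congr 1; ext π; ring
  simp only [h1, ← Finset.mul_sum, ← permMean_sum]
  rw [← permMean_const_mul, ← permMean_const_mul]
  congr 1; ext π
  simp only [← Finset.sum_mul, sum_swapDiff hc]
  ring

/-- A permutation taking `p` to `i` and `q` to `j` and moving only these four points. -/
def pairPerm (i j p q : α) : Perm α := swap i (swap j q p) * swap j q

theorem pairPerm_apply_left (i j p q : α) : pairPerm i j p q p = i := by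
  simp [pairPerm]

theorem pairPerm_apply_right {i j p q : α} (hij : i ≠ j) (hpq : p ≠ q) :
    pairPerm i j p q q = j := by
  have h : j ≠ swap j q p := fun h => hpq (by
    have := congrArg (swap j q) h
    simpa using this.symm)
  simp [pairPerm, swap_apply_of_ne_of_ne hij.symm h]

theorem pairPerm_apply_of_ne {i j p q x : α} (hi : x ≠ i) (hj : x ≠ j) (hp : x ≠ p) (hq : x ≠ q) :
    pairPerm i j p q x = x := by
  have h : x ≠ swap j q p := fun h => hp (by
    have := congrArg (swap j q) h
    rw [swap_apply_of_ne_of_ne hj hq] at this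
    simpa using this)
  simp [pairPerm, swap_apply_of_ne_of_ne hj hq, swap_apply_of_ne_of_ne hi h]

/-- Randomizing the preimages of `π i` and `π j` decouples them from the permutation. -/
theorem sum_offDiag_permMean_mul {i j : α} (hij : i ≠ j) (φ : α → α → ℝ) (G : Perm α → ℝ) :
    ∑ x ∈ (univ : Finset α).offDiag,
        permMean (fun π => φ (π i) (π j) * G (π * pairPerm i j x.1 x.2))
      = permMean G * ∑ x ∈ (univ : Finset α).offDiag, φ x.1 x.2 := by
  have h1 : ∀ x ∈ (univ : Finset α).offDiag,
      permMean (fun π => φ (π i) (π j) * G (π * pairPerm i j x.1 x.2))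
        = permMean fun σ => φ (σ x.1) (σ x.2) * G σ := fun x hx => by
    rw [Finset.mem_offDiag] at hx
    rw [← permMean_comp_mul_right (pairPerm i j x.1 x.2) fun σ => φ (σ x.1) (σ x.2) * G σ]
    simp only [Perm.mul_apply, pairPerm_apply_left, pairPerm_apply_right hij hx.2.2]
  rw [Finset.sum_congr rfl h1, ← permMean_sum, ← permMean_mul_const]
  congr 1; ext σ
  rw [← Finset.sum_mul, mul_comm]
  congr 1
  refine Finset.sum_nbij' (fun x => (σ x.1, σ x.2)) (fun x => (σ⁻¹ x.1, σ⁻¹ x.2)) ?_ ?_ ?_ ?_ ?_ <;>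
    simp [Finset.mem_offDiag]

theorem card_offDiag_mul_permMean {i j : α} (hij : i ≠ j) (φ : α → α → ℝ) :
    (Fintype.card α * (Fintype.card α - 1 : ℝ)) * permMean (fun π => φ (π i) (π j))
      = ∑ x ∈ (univ : Finset α).offDiag, φ x.1 x.2 := by
  have h := sum_offDiag_permMean_mul hij φ fun _ => 1
  simp only [mul_one, permMean_const, one_mul, Finset.sum_const, nsmul_eq_mul] at h
  rw [← h, Finset.offDiag_card, Finset.card_univ, Nat.cast_sub (Nat.le_mul_self _)]
  push_cast
  ring

theorem sum_sq_four_differences {c : α → α → ℝ} (hc : IsCentered c) :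
    ∑ i, ∑ j, ∑ k, ∑ l, (c i k + c j l - c i l - c j k) ^ 2
      = 4 * (Fintype.card α : ℝ) ^ 2 * ∑ i, ∑ j, c i j ^ 2 := by
  set n : ℝ := (Fintype.card α : ℝ)
  set Q := ∑ i, ∑ j, c i j ^ 2 with hQ
  have hkl : ∀ i j, ∑ k, ∑ l, (c i k + c j l - c i l - c j k) ^ 2
      = 2 * n * ∑ k, (c i k - c j k) ^ 2 := fun i j => by
    have h0 : ∑ k, (c i k - c j k) = 0 := by rw [Finset.sum_sub_distrib, hc.row, hc.row, sub_zero]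
    have h1 : ∀ k l, (c i k + c j l - c i l - c j k) ^ 2
        = (c i k - c j k) ^ 2 + (c i l - c j l) ^ 2
          - 2 * (c i k - c j k) * (c i l - c j l) := fun k l => by ring
    simp only [h1, Finset.sum_sub_distrib, Finset.sum_add_distrib, ← Finset.mul_sum, h0]
    simp [n, ← Finset.mul_sum]
    ring
  have hij : ∑ i, ∑ j, ∑ k, (c i k - c j k) ^ 2 = 2 * n * Q := by
    have h1 : ∀ i j, ∑ k, (c i k - c j k) ^ 2
        = ∑ k, c i k ^ 2 + ∑ k, c j k ^ 2 - ∑ k, 2 * (c i k * c j k) := fun i j => by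
      rw [← Finset.sum_add_distrib, ← Finset.sum_sub_distrib]
      exact Finset.sum_congr rfl fun k _ => by ring
    have h2 : ∑ i, ∑ j, ∑ k, 2 * (c i k * c j k) = 0 := by
      refine Finset.sum_eq_zero fun i _ => ?_
      rw [Finset.sum_comm]
      simp [← Finset.mul_sum, hc.col]
    simp only [h1, Finset.sum_sub_distrib, Finset.sum_add_distrib, h2]
    simp [n, ← Finset.mul_sum, ← hQ]
    ring
  simp only [hkl, ← Finset.mul_sum, hij]
  ring

theorem offDiag_sum_of_diag_eq_zero {φ : α → α → ℝ} (h : ∀ k, φ k k = 0) :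
    ∑ x ∈ (univ : Finset α).offDiag, φ x.1 x.2 = ∑ k, ∑ l, φ k l := by
  rw [← Finset.sum_product', Finset.univ_product_univ]
  refine Finset.sum_subset (Finset.subset_univ _) fun x _ hx => ?_
  have : x.1 = x.2 := by simpa [Finset.mem_offDiag] using hx
  rw [this, h]

theorem permMean_permSum_sq {c : α → α → ℝ} (hc : IsCentered c) (hn : 2 ≤ Fintype.card α) :
    permMean (fun π => permSum c π ^ 2)
      = (∑ i, ∑ j, c i j ^ 2) / ((Fintype.card α : ℝ) - 1) := by
  have h2 : (2 : ℝ) ≤ Fintype.card α := by exact_mod_cast hn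
  have h := stein_identity hc id
  simp only [id, sub_sub_cancel] at h
  have hd : ∀ i j, (Fintype.card α * (Fintype.card α - 1 : ℝ)) *
      permMean (fun π => swapDiff c i j π * swapDiff c i j π)
      = ∑ k, ∑ l, (c i k + c j l - c i l - c j k) ^ 2 := fun i j => by
    rcases eq_or_ne i j with rfl | hij
    · simp [swapDiff, permMean_const]
    · have h1 := card_offDiag_mul_permMean hij fun k l => (c i k + c j l - c i l - c j k) ^ 2
      rw [offDiag_sum_of_diag_eq_zero
        (φ := fun k l => (c i k + c j l - c i l - c j k) ^ 2) fun k => by ring] at h1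
      rw [← h1]
      congr 2; ext π
      simp only [swapDiff]; ring
  have h3 : (Fintype.card α * (Fintype.card α - 1 : ℝ)) *
      (4 * Fintype.card α * permMean fun π => permSum c π * permSum c π)
      = 4 * (Fintype.card α : ℝ) ^ 2 * ∑ i, ∑ j, c i j ^ 2 := by
    rw [h, ← sum_sq_four_differences hc]
    simp only [Finset.mul_sum, hd]
  have h4 : (4 * (Fintype.card α : ℝ) ^ 2) ≠ 0 := by positivity
  simp only [pow_two (permSum c _)]
  rw [eq_div_iff (by linarith)]
  apply mul_left_cancel₀ h4
  linear_combination h3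

end Permutations

section SmoothedIndicator

/-- The piecewise linear function equal to `1` on `(-∞, z]` and to `0` on `[z + l, ∞)`. -/
noncomputable def ramp (z l x : ℝ) : ℝ := max 0 (min 1 ((z + l - x) / l))

theorem continuous_ramp (z l : ℝ) : Continuous (ramp z l) := by
  unfold ramp; fun_prop

theorem ramp_nonneg (z l x : ℝ) : 0 ≤ ramp z l x := le_max_left _ _

theorem ramp_le_one (z l x : ℝ) : ramp z l x ≤ 1 := max_le zero_le_one (min_le_left _ _)

theorem ramp_eq_one {z l x : ℝ} (hl : 0 < l) (hx : x ≤ z) : ramp z l x = 1 := by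
  have h : 1 ≤ (z + l - x) / l := by rw [le_div_iff₀ hl]; linarith
  rw [ramp, min_eq_left h, max_eq_right zero_le_one]

theorem ramp_eq_zero {z l x : ℝ} (hl : 0 < l) (hx : z + l ≤ x) : ramp z l x = 0 := by
  have h : (z + l - x) / l ≤ 0 := div_nonpos_of_nonpos_of_nonneg (by linarith) hl.le
  rw [ramp, min_eq_right (h.trans zero_le_one), max_eq_left h]

theorem abs_ramp_sub_le {z l : ℝ} (hl : 0 < l) (s : ℝ) {x y : ℝ} (hxy : x ≤ y) :
    |ramp z l (s + x) - ramp z l (s + y)|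
      ≤ (y - x) / l * (if z - y < s ∧ s ≤ z - y + (l + (y - x)) then 1 else 0) := by
  split_ifs with h
  · have h1 : |ramp z l (s + x) - ramp z l (s + y)|
        ≤ |(z + l - (s + x)) / l - (z + l - (s + y)) / l| := by
      unfold ramp
      refine (abs_max_sub_max_le_max _ _ _ _).trans ?_
      rw [sub_self, abs_zero, max_eq_right (abs_nonneg _)]
      refine (abs_min_sub_min_le_max _ _ _ _).trans ?_
      rw [sub_self, abs_zero, max_eq_right (abs_nonneg _)]
    rw [← sub_div, show z + l - (s + x) - (z + l - (s + y)) = y - x by ring,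
      abs_of_nonneg (div_nonneg (by linarith) hl.le)] at h1
    rwa [mul_one]
  · rw [mul_zero]
    by_cases h1 : z - y < s
    · have h2 : z - y + (l + (y - x)) < s := by
        by_contra! h3
        exact h ⟨h1, h3⟩
      rw [ramp_eq_zero hl (by linarith), ramp_eq_zero hl (by linarith)]; simp
    · rw [ramp_eq_one hl (by linarith), ramp_eq_one hl (by linarith)]; simp

/-- An approximate Lipschitz bound at small scales propagates to all scales. -/
theorem abs_sub_le_of_local {H : ℝ → ℝ} {M M' : ℝ}
    (h : ∀ x y, x ≤ y → |H x - H y| ≤ (y - x) * (M + M' * (y - x))) (x y : ℝ) :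
    |H x - H y| ≤ |x - y| * M := by
  wlog hxy : x ≤ y generalizing x y
  · rw [abs_sub_comm, abs_sub_comm x y]
    exact this y x (le_of_not_ge hxy)
  rw [abs_sub_comm x y, abs_of_nonneg (sub_nonneg.mpr hxy)]
  have key : ∀ N : ℕ, |H x - H y| ≤ (y - x) * (M + M' * ((y - x) / ((N : ℝ) + 1))) := fun N => by
    have hN : (0 : ℝ) < (N : ℝ) + 1 := by positivity
    set d := (y - x) / ((N : ℝ) + 1) with hd
    have hd0 : 0 ≤ d := div_nonneg (sub_nonneg.mpr hxy) hN.le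
    have hdN : ((N : ℝ) + 1) * d = y - x := by rw [hd]; field_simp
    have hind : ∀ k : ℕ, |H x - H (x + k * d)| ≤ k * (d * (M + M' * d)) := fun k => by
      induction k with
      | zero => simp
      | succ k ih =>
        have h1 := h (x + k * d) (x + (k + 1 : ℕ) * d) (by push_cast; linarith)
        have h2 : x + ((k + 1 : ℕ) : ℝ) * d - (x + k * d) = d := by push_cast; ring
        rw [h2] at h1
        refine (abs_sub_le _ (H (x + k * d)) _).trans ?_
        push_cast at h1 ⊢
        linarith
    have h3 := hind (N + 1)
    push_cast at h3
    rw [hdN, show x + (y - x) = y by ring] at h3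
    rwa [← mul_assoc, hdN] at h3
  have htend : Filter.Tendsto
      (fun N : ℕ => (y - x) * (M + M' * ((y - x) / ((N : ℝ) + 1)))) Filter.atTop
      (nhds ((y - x) * (M + M' * 0))) := by
    have h1 : Filter.Tendsto (fun N : ℕ => (y - x) / ((N : ℝ) + 1)) Filter.atTop (nhds 0) := by
      have := (tendsto_one_div_add_atTop_nhds_zero_nat (𝕜 := ℝ)).const_mul (y - x)
      simpa [div_eq_mul_inv] using this
    exact ((h1.const_mul M').const_add M).const_mul _
  rw [mul_zero, add_zero] at htend
  exact ge_of_tendsto' htend key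

variable {α : Type*} [Fintype α] [DecidableEq α]

/-- `S` puts mass at most `A * l + B` on every interval of length `l`. -/
def IsSpread (S : Perm α → ℝ) (A B : ℝ) : Prop :=
  ∀ t l : ℝ, 0 ≤ l → permMean (fun ρ => if t < S ρ ∧ S ρ ≤ t + l then 1 else 0) ≤ A * l + B

theorem abs_permMean_ramp_sub_le {S : Perm α → ℝ} {A B : ℝ} (hS : IsSpread S A B) {z l : ℝ}
    (hl : 0 < l) (x y : ℝ) :
    |permMean (fun ρ => ramp z l (S ρ + x)) - permMean (fun ρ => ramp z l (S ρ + y))|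
      ≤ |x - y| * (A + B / l) := by
  refine abs_sub_le_of_local (H := fun x => permMean fun ρ => ramp z l (S ρ + x))
    (M' := A / l) (fun x y hxy => ?_) x y
  rw [← permMean_sub]
  refine (abs_permMean_le _).trans ((permMean_mono fun ρ => abs_ramp_sub_le hl (S ρ) hxy).trans ?_)
  rw [permMean_const_mul]
  refine (mul_le_mul_of_nonneg_left (hS (z - y) (l + (y - x)) (by linarith))
    (div_nonneg (sub_nonneg.mpr hxy) hl.le)).trans (le_of_eq ?_)
  field_simp
  ring

theorem hasDerivAt_permMean {f g : ℝ → ℝ} (hf : ∀ w, HasDerivAt f (g w) w) (S : Perm α → ℝ)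
    (x : ℝ) :
    HasDerivAt (fun x => permMean fun ρ => f (S ρ + x)) (permMean fun ρ => g (S ρ + x)) x := by
  simp only [permMean]
  refine HasDerivAt.div_const ?_ _
  exact HasDerivAt.fun_sum fun ρ _ => (hf (S ρ + x)).comp_const_add (S ρ) x

/-- Regularity of the derivative of the Stein solution, averaged over a spread-out variable. -/
theorem abs_permMean_stein_deriv_sub_le {S : Perm α → ℝ} {A B : ℝ} (hS : IsSpread S A B)
    {z l N F₀ : ℝ} (hl : 0 < l) {f g : ℝ → ℝ} (hf : ∀ w, HasDerivAt f (g w) w)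
    (hg : ∀ w, g w = w * f w + (ramp z l w - N)) (hf0 : ∀ w, |f w| ≤ F₀) (hg2 : ∀ w, |g w| ≤ 2)
    (a : ℝ) :
    |permMean (fun ρ => g (S ρ + a)) - permMean (fun ρ => g (S ρ))|
      ≤ |a| * (F₀ + permMean (fun ρ => 2 * |S ρ|) + (A + B / l)) := by
  have hlip : ∀ u v, |f u - f v| ≤ 2 * |u - v| := fun u v => by
    have := Convex.norm_image_sub_le_of_norm_hasDerivWithin_le (f := f) (f' := g) (C := 2)
      (s := Set.univ) (x := v) (y := u) (fun w _ => (hf w).hasDerivWithinAt)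
      (fun w _ => hg2 w) convex_univ (Set.mem_univ _) (Set.mem_univ _)
    exact this
  have h1 : ∀ s, g (s + a) - g s
      = (a * f (s + a) + s * (f (s + a) - f s)) + (ramp z l (s + a) - ramp z l (s + 0)) :=
    fun s => by rw [hg, hg, add_zero]; ring
  rw [← permMean_sub]
  simp only [h1]
  rw [permMean_add]
  refine (abs_add_le _ _).trans ?_
  rw [mul_add]
  refine add_le_add ?_ ?_
  · refine (abs_permMean_le _).trans ?_
    rw [← permMean_const (α := α) F₀, ← permMean_add, ← permMean_const_mul]
    refine permMean_mono fun ρ => ?_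
    refine (abs_add_le _ _).trans ?_
    rw [abs_mul, abs_mul, mul_add]
    refine add_le_add (mul_le_mul_of_nonneg_left (hf0 _) (abs_nonneg _)) ?_
    have := hlip (S ρ + a) (S ρ)
    rw [add_sub_cancel_left] at this
    nlinarith [mul_le_mul_of_nonneg_left this (abs_nonneg (S ρ))]
  · rw [permMean_sub]
    have := abs_permMean_ramp_sub_le hS hl (z := z) a 0
    rwa [sub_zero] at this

theorem abs_stein_increment_le {S : Perm α → ℝ} {f g : ℝ → ℝ} {K : ℝ}
    (hf : ∀ w, HasDerivAt f (g w) w) (hK0 : 0 ≤ K)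
    (hK : ∀ a, |permMean (fun ρ => g (S ρ + a)) - permMean (fun ρ => g (S ρ))| ≤ |a| * K)
    {a b d v : ℝ} (hb : |b| ≤ v) (hbd : |b - d| ≤ v) :
    |d ^ 2 * permMean (fun ρ => g (S ρ + a))
        - d * (permMean (fun ρ => f (S ρ + b)) - permMean (fun ρ => f (S ρ + (b - d))))|
      ≤ d ^ 2 * ((|a| + v) * K) := by
  set F := fun x => permMean fun ρ => f (S ρ + x) with hF
  set F' := fun x => permMean fun ρ => g (S ρ + x) with hF'
  have hd : ∀ x ∈ Set.Icc (-v) v,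
      HasDerivWithinAt (fun x => F x - F' a * x) (F' x - F' a) (Set.Icc (-v) v) x := fun x _ => by
    have h1 := (hasDerivAt_permMean hf S x).sub ((hasDerivAt_id x).const_mul (F' a))
    rw [mul_one] at h1
    exact h1.hasDerivWithinAt
  have hC : ∀ x ∈ Set.Icc (-v) v, ‖F' x - F' a‖ ≤ (|a| + v) * K := fun x hx => by
    have h1 := hK x
    have h2 := hK a
    have h3 : |x| * K ≤ v * K := mul_le_mul_of_nonneg_right (abs_le.mpr hx) hK0
    rw [abs_sub_comm] at h2
    rw [Real.norm_eq_abs]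
    refine (abs_sub_le _ (permMean fun ρ => g (S ρ)) _).trans ?_
    simp only [hF']
    linarith
  have hm := Convex.norm_image_sub_le_of_norm_hasDerivWithin_le hd hC (convex_Icc _ _)
    (abs_le.mp hbd) (abs_le.mp hb)
  rw [Real.norm_eq_abs, Real.norm_eq_abs, sub_sub_cancel] at hm
  have e : d ^ 2 * F' a - d * (F b - F (b - d))
      = -(d * (F b - F' a * b - (F (b - d) - F' a * (b - d)))) := by ring
  rw [e, abs_neg, abs_mul]
  calc |d| * |F b - F' a * b - (F (b - d) - F' a * (b - d))|
      ≤ |d| * ((|a| + v) * K * |d|) := mul_le_mul_of_nonneg_left hm (abs_nonneg d)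
    _ = d ^ 2 * ((|a| + v) * K) := by rw [← sq_abs d]; ring

end SmoothedIndicator

section Deletion

set_option linter.unusedSectionVars false

variable {α : Type*} [Fintype α] [DecidableEq α]

theorem isSpread_of_kolmogorov {c : α → α → ℝ} {s σ δ : ℝ} (hσ : 0 < σ)
    (h : ∀ z, |permMean (fun ρ => if permSum (fun i j => c i j / σ) ρ ≤ z then 1 else 0)
      - stdNormalCDF z| ≤ δ) :
    IsSpread (fun ρ => permSum c ρ + s) (2 / 5 / σ) (2 * δ) := by
  intro t l hl
  have hW : ∀ ρ u, (permSum (fun i j => c i j / σ) ρ ≤ (u - s) / σ ↔ permSum c ρ + s ≤ u) :=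
    fun ρ u => by
      simp only [permSum, ← Finset.sum_div]
      rw [div_le_div_iff_of_pos_right hσ, le_sub_iff_add_le]
  have h1 := (abs_le.mp (h ((t - s) / σ))).1
  have h2 := (abs_le.mp (h ((t + l - s) / σ))).2
  simp only [hW] at h1 h2
  have h3 := stdNormalCDF_sub_le (a := (t - s) / σ) (b := (t + l - s) / σ)
    (div_le_div_of_nonneg_right (by linarith) hσ.le)
  have h4 : 2 / 5 * ((t + l - s) / σ - (t - s) / σ) = 2 / 5 / σ * l := by ring
  have h5 : ∀ ρ : Perm α, (if t < permSum c ρ + s ∧ permSum c ρ + s ≤ t + l then (1 : ℝ) else 0)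
      = (if permSum c ρ + s ≤ t + l then 1 else 0) - (if permSum c ρ + s ≤ t then 1 else 0) :=
    fun ρ => by
      by_cases h6 : permSum c ρ + s ≤ t
      · have h7 : permSum c ρ + s ≤ t + l := by linarith
        simp [h6, h7]
      · simp [h6, not_le.mp h6]
  simp only [h5]
  rw [permMean_sub]
  linarith

theorem sum_subtype_not_mem (A : Finset α) (f : α → ℝ) :
    ∑ y : {x // x ∉ A}, f y = ∑ y, f y - ∑ y ∈ A, f y := by
  have h := Fintype.sum_subtype_add_sum_subtype (fun x => x ∈ A) f
  rw [← h, ← Finset.sum_subtype A (fun _ => Iff.rfl) f]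
  ring

theorem sum_subtype_not_mem_le (A : Finset α) {f : α → ℝ} (hf : ∀ x, 0 ≤ f x) :
    ∑ y : {x // x ∉ A}, f y ≤ ∑ y, f y := by
  rw [sum_subtype_not_mem]
  linarith [Finset.sum_nonneg fun x (_ : x ∈ A) => hf x]

theorem sum_sum_subtype_not_mem_le (A : Finset α) {f : α → α → ℝ} (hf : ∀ x y, 0 ≤ f x y) :
    ∑ x : {x // x ∉ A}, ∑ y : {x // x ∉ A}, f x y ≤ ∑ x, ∑ y, f x y :=
  (Finset.sum_le_sum fun (x : {x // x ∉ A}) _ => sum_subtype_not_mem_le A (hf x)).trans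
    (sum_subtype_not_mem_le A (f := fun x => ∑ y, f x y) fun x =>
      Finset.sum_nonneg fun y _ => hf x y)

theorem add_cube_le {a b : ℝ} (ha : 0 ≤ a) (hb : 0 ≤ b) :
    (a + b) ^ 3 ≤ 144 / 121 * a ^ 3 + 144 * b ^ 3 := by
  nlinarith [mul_nonneg (sq_nonneg (a - 11 * b)) (add_nonneg
    (mul_nonneg (by norm_num : (0 : ℝ) ≤ 23 / 121) ha)
    (mul_nonneg (by norm_num : (0 : ℝ) ≤ 143 / 121) hb))]

theorem abs_add_three_cube_le (a b c : ℝ) :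
    |a + b + c| ^ 3 ≤ 9 * (|a| ^ 3 + |b| ^ 3 + |c| ^ 3) := by
  have h := pow_sum_div_card_le_sum_pow (s := (univ : Finset (Fin 3))) (f := ![|a|, |b|, |c|])
    (by intro i _; fin_cases i <;> simp) 2
  simp [Fin.sum_univ_three] at h
  have h1 : |a + b + c| ^ 3 ≤ (|a| + |b| + |c|) ^ 3 :=
    pow_le_pow_left₀ (abs_nonneg _) (abs_add_three a b c) 3
  rw [div_le_iff₀ (by norm_num)] at h
  linarith

theorem abs_sum_cube_le {A : Finset α} (hA : A.card ≤ 4) (f : α → ℝ) :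
    |∑ x ∈ A, f x| ^ 3 ≤ 16 * ∑ x ∈ A, |f x| ^ 3 := by
  have h0 : 0 ≤ ∑ x ∈ A, |f x| ^ 3 := Finset.sum_nonneg fun x _ => by positivity
  rcases A.eq_empty_or_nonempty with rfl | hne
  · simp
  have hpos : (0 : ℝ) < (A.card : ℝ) ^ 2 := by
    have := hne.card_pos; positivity
  have h := pow_sum_div_card_le_sum_pow (s := A) (f := fun x => |f x|) (fun _ _ => abs_nonneg _) 2
  rw [div_le_iff₀ hpos] at h
  have h1 : |∑ x ∈ A, f x| ^ 3 ≤ (∑ x ∈ A, |f x|) ^ 3 :=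
    pow_le_pow_left₀ (abs_nonneg _) (Finset.abs_sum_le_sum_abs _ _) 3
  have h2 : (A.card : ℝ) ^ 2 ≤ 16 := by
    have : (A.card : ℝ) ≤ 4 := by exact_mod_cast hA
    nlinarith [(Nat.cast_nonneg A.card : (0 : ℝ) ≤ A.card)]
  calc _ ≤ _ := h1
    _ ≤ _ := h
    _ ≤ _ := by rw [mul_comm]; exact mul_le_mul_of_nonneg_right h2 h0

theorem sq_sum_le_four_mul {A : Finset α} (hA : A.card ≤ 4) (f : α → ℝ) :
    (∑ x ∈ A, f x) ^ 2 ≤ 4 * ∑ x ∈ A, f x ^ 2 :=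
  sq_sum_le_card_mul_sum_sq.trans (mul_le_mul_of_nonneg_right (by exact_mod_cast hA)
    (Finset.sum_nonneg fun x _ => sq_nonneg _))

/-- The array left after deleting the rows and columns in `A`, made centered again. -/
noncomputable def recenter (c : α → α → ℝ) (A : Finset α) (x y : {x // x ∉ A}) : ℝ :=
  c x y + ((∑ q ∈ A, c x q) / Fintype.card {x // x ∉ A}
    + (∑ p ∈ A, c p y) / Fintype.card {x // x ∉ A}
    + (∑ p ∈ A, ∑ q ∈ A, c p q) / (Fintype.card {x // x ∉ A} : ℝ) ^ 2)

theorem IsCentered.swap {c : α → α → ℝ} (hc : IsCentered c) : IsCentered fun i j => c j i :=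
  ⟨hc.col, hc.row⟩

theorem recenter_swap (c : α → α → ℝ) (A : Finset α) (x y : {x // x ∉ A}) :
    recenter (fun i j => c j i) A x y = recenter c A y x := by
  simp only [recenter]
  rw [Finset.sum_comm (s := A) (t := A)]
  ring

theorem sum_subtype_sum {c : α → α → ℝ} (hc : IsCentered c) (A : Finset α) :
    ∑ x : {x // x ∉ A}, ∑ q ∈ A, c x q = -∑ p ∈ A, ∑ q ∈ A, c p q := by
  rw [sum_subtype_not_mem A fun x => ∑ q ∈ A, c x q, Finset.sum_comm]
  simp [hc.col]

theorem recenter_row {c : α → α → ℝ} (hc : IsCentered c) (A : Finset α)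
    (hm : (Fintype.card {x // x ∉ A} : ℝ) ≠ 0) (x : {x // x ∉ A}) :
    ∑ y, recenter c A x y = 0 := by
  have h := sum_subtype_sum hc.swap A
  rw [Finset.sum_comm (s := A) (t := A)] at h
  simp only [recenter, Finset.sum_add_distrib, ← Finset.sum_div, h]
  rw [sum_subtype_not_mem A fun y => c x y, hc.row]
  simp only [Finset.sum_const, Finset.card_univ, nsmul_eq_mul]
  field_simp
  ring

theorem isCentered_recenter {c : α → α → ℝ} (hc : IsCentered c) (A : Finset α)
    (hm : (Fintype.card {x // x ∉ A} : ℝ) ≠ 0) : IsCentered (recenter c A) :=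
  ⟨recenter_row hc A hm, fun y => by
    have h := recenter_row hc.swap A hm y
    simpa only [recenter_swap] using h⟩

theorem permSum_restrict {c : α → α → ℝ} (hc : IsCentered c) (A : Finset α)
    (hm : (Fintype.card {x // x ∉ A} : ℝ) ≠ 0) (ρ : Perm {x // x ∉ A}) :
    permSum (fun x y : {x // x ∉ A} => c x y) ρ = permSum (recenter c A) ρ
      + (∑ p ∈ A, ∑ q ∈ A, c p q) / Fintype.card {x // x ∉ A} := by
  have h1 := sum_subtype_sum hc A
  have h2 := sum_subtype_sum hc.swap A
  rw [Finset.sum_comm (s := A) (t := A)] at h2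
  simp only [permSum, recenter, Finset.sum_add_distrib, ← Finset.sum_div, h1]
  rw [sum_apply_perm ρ (fun y : {x // x ∉ A} => ∑ p ∈ A, c p y), h2]
  simp only [Finset.sum_const, Finset.card_univ, nsmul_eq_mul]
  field_simp
  ring

theorem sum_recenter_sq {c : α → α → ℝ} (hc : IsCentered c) (A : Finset α)
    (hm : (Fintype.card {x // x ∉ A} : ℝ) ≠ 0) :
    ∑ x, ∑ y, recenter c A x y ^ 2 = ∑ x, ∑ y, recenter c A x y * c x y := by
  have hr := isCentered_recenter hc A hm
  have h : ∀ x y : {x // x ∉ A}, recenter c A x y ^ 2 = recenter c A x y * c x y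
      + (recenter c A x y * ((∑ q ∈ A, c x q) / Fintype.card {x // x ∉ A})
      + recenter c A x y * ((∑ p ∈ A, c p y) / Fintype.card {x // x ∉ A})
      + recenter c A x y *
        ((∑ p ∈ A, ∑ q ∈ A, c p q) / (Fintype.card {x // x ∉ A} : ℝ) ^ 2)) := fun x y => by
    rw [pow_two]
    nth_rewrite 2 [recenter]
    ring
  have h2 : ∑ x, ∑ y : {x // x ∉ A},
      recenter c A x y * ((∑ p ∈ A, c p y) / Fintype.card {x // x ∉ A}) = 0 := by
    rw [Finset.sum_comm]
    simp only [← Finset.sum_mul, hr.col, zero_mul, Finset.sum_const_zero]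
  simp only [h, Finset.sum_add_distrib, h2]
  simp only [← Finset.sum_mul, hr.row, zero_mul, Finset.sum_const_zero, add_zero]

theorem sum_recenter_sq_le {c : α → α → ℝ} (hc : IsCentered c) (A : Finset α)
    (hm : (Fintype.card {x // x ∉ A} : ℝ) ≠ 0) :
    ∑ x, ∑ y, recenter c A x y ^ 2 ≤ ∑ x, ∑ y, c x y ^ 2 := by
  have h := sum_recenter_sq hc A hm
  have h1 : ∑ x, ∑ y, recenter c A x y * c x y
      ≤ (∑ x, ∑ y, recenter c A x y ^ 2) / 2
        + (∑ x : {x // x ∉ A}, ∑ y : {x // x ∉ A}, c x y ^ 2) / 2 := by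
    simp only [Finset.sum_div, ← Finset.sum_add_distrib]
    refine Finset.sum_le_sum fun x _ => Finset.sum_le_sum fun y _ => ?_
    nlinarith [sq_nonneg (recenter c A x y - c x y)]
  have h2 : ∑ x : {x // x ∉ A}, ∑ y : {x // x ∉ A}, c x y ^ 2 ≤ ∑ x, ∑ y, c x y ^ 2 :=
    sum_sum_subtype_not_mem_le A fun x y => sq_nonneg (c x y)
  linarith

theorem le_sum_recenter_sq {c : α → α → ℝ} (hc : IsCentered c) {A : Finset α} (hA : A.card ≤ 4)
    (hm : 0 < (Fintype.card {x // x ∉ A} : ℝ)) :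
    ∑ x, ∑ y, c x y ^ 2
        - (1 + 4 / Fintype.card {x // x ∉ A})
          * (∑ p ∈ A, ∑ y, c p y ^ 2 + ∑ q ∈ A, ∑ x, c x q ^ 2)
      ≤ ∑ x, ∑ y, recenter c A x y ^ 2 := by
  have h := sum_recenter_sq hc A hm.ne'
  set m : ℝ := (Fintype.card {x // x ∉ A} : ℝ)
  have hexp : ∑ x, ∑ y, recenter c A x y * c x y
      = ∑ x : {x // x ∉ A}, ∑ y : {x // x ∉ A}, c x y ^ 2
        - (∑ x : {x // x ∉ A}, (∑ q ∈ A, c x q) ^ 2) / m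
        - (∑ y : {x // x ∉ A}, (∑ p ∈ A, c p y) ^ 2) / m
        + (∑ p ∈ A, ∑ q ∈ A, c p q) ^ 2 / m ^ 2 := by
    have e1 : ∀ x : α, ∑ y : {x // x ∉ A}, c x y = -∑ q ∈ A, c x q := fun x => by
      rw [sum_subtype_not_mem A fun y => c x y, hc.row, zero_sub]
    have e2 : ∀ y : α, ∑ x : {x // x ∉ A}, c x y = -∑ p ∈ A, c p y := fun y => by
      rw [sum_subtype_not_mem A fun x => c x y, hc.col, zero_sub]
    have e3 : ∀ x y : {x // x ∉ A}, recenter c A x y * c x y = c x y ^ 2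
        + (∑ q ∈ A, c x q) / m * c x y + (∑ p ∈ A, c p y) / m * c x y
        + (∑ p ∈ A, ∑ q ∈ A, c p q) / m ^ 2 * c x y := fun x y => by
      rw [recenter]; ring
    have e4 : ∑ x : {x // x ∉ A}, ∑ y : {x // x ∉ A}, (∑ p ∈ A, c p y) / m * c x y
        = -((∑ y : {x // x ∉ A}, (∑ p ∈ A, c p y) ^ 2) / m) := by
      rw [Finset.sum_comm, Finset.sum_div, ← Finset.sum_neg_distrib]
      refine Finset.sum_congr rfl fun y _ => ?_
      rw [← Finset.mul_sum, e2]; ring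
    have e5 : ∑ x : {x // x ∉ A}, ∑ y : {x // x ∉ A}, (∑ q ∈ A, c x q) / m * c x y
        = -((∑ x : {x // x ∉ A}, (∑ q ∈ A, c x q) ^ 2) / m) := by
      rw [Finset.sum_div, ← Finset.sum_neg_distrib]
      refine Finset.sum_congr rfl fun y _ => ?_
      rw [← Finset.mul_sum, e1]; ring
    have e6 : ∑ x : {x // x ∉ A}, ∑ y : {x // x ∉ A},
        (∑ p ∈ A, ∑ q ∈ A, c p q) / m ^ 2 * c x y
        = (∑ p ∈ A, ∑ q ∈ A, c p q) ^ 2 / m ^ 2 := by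
      simp only [← Finset.mul_sum, e1, Finset.sum_neg_distrib, sum_subtype_sum hc A]
      ring
    simp only [e3, Finset.sum_add_distrib, e4, e5, e6]
    ring
  have hR : ∑ x : {x // x ∉ A}, (∑ q ∈ A, c x q) ^ 2 ≤ 4 * ∑ q ∈ A, ∑ x, c x q ^ 2 := by
    rw [Finset.sum_comm, Finset.mul_sum]
    refine (sum_subtype_not_mem_le A fun x => sq_nonneg (∑ q ∈ A, c x q)).trans ?_
    exact Finset.sum_le_sum fun x _ => sq_sum_le_four_mul hA _
  have hC : ∑ y : {x // x ∉ A}, (∑ p ∈ A, c p y) ^ 2 ≤ 4 * ∑ p ∈ A, ∑ y, c p y ^ 2 := by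
    rw [Finset.sum_comm, Finset.mul_sum]
    refine (sum_subtype_not_mem_le A fun y => sq_nonneg (∑ p ∈ A, c p y)).trans ?_
    exact Finset.sum_le_sum fun x _ => sq_sum_le_four_mul hA _
  have hD : ∑ x, ∑ y, c x y ^ 2 - ∑ p ∈ A, ∑ y, c p y ^ 2 - ∑ q ∈ A, ∑ x, c x q ^ 2
      ≤ ∑ x : {x // x ∉ A}, ∑ y : {x // x ∉ A}, c x y ^ 2 := by
    have e : ∀ x : α, ∑ y : {x // x ∉ A}, c x y ^ 2 = ∑ y, c x y ^ 2 - ∑ y ∈ A, c x y ^ 2 :=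
      fun x => sum_subtype_not_mem A fun y => c x y ^ 2
    simp only [e, Finset.sum_sub_distrib]
    rw [sum_subtype_not_mem A fun x => ∑ y, c x y ^ 2,
      sum_subtype_not_mem A fun x => ∑ y ∈ A, c x y ^ 2, Finset.sum_comm (s := univ) (t := A)]
    linarith [Finset.sum_nonneg fun x (_ : x ∈ A) =>
      Finset.sum_nonneg fun y (_ : y ∈ A) => sq_nonneg (c x y)]
  have hR' := div_le_div_of_nonneg_right hR hm.le
  have hC' := div_le_div_of_nonneg_right hC hm.le
  have hG : 0 ≤ (∑ p ∈ A, ∑ q ∈ A, c p q) ^ 2 / m ^ 2 := by positivity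
  rw [h, hexp]
  have e : (1 + 4 / m) * (∑ p ∈ A, ∑ y, c p y ^ 2 + ∑ q ∈ A, ∑ x, c x q ^ 2)
      = ∑ p ∈ A, ∑ y, c p y ^ 2 + ∑ q ∈ A, ∑ x, c x q ^ 2
        + (4 * ∑ p ∈ A, ∑ y, c p y ^ 2) / m + (4 * ∑ q ∈ A, ∑ x, c x q ^ 2) / m := by ring
  rw [e]
  linarith

theorem sum_recenter_cube_le (c : α → α → ℝ) {A : Finset α} (hA : A.card ≤ 4)
    (hm : 0 < (Fintype.card {x // x ∉ A} : ℝ)) :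
    ∑ x, ∑ y, |recenter c A x y| ^ 3
      ≤ (144 / 121 + 144 * (288 / (Fintype.card {x // x ∉ A} : ℝ) ^ 2
        + 2304 / (Fintype.card {x // x ∉ A} : ℝ) ^ 4)) * ∑ x, ∑ y, |c x y| ^ 3 := by
  set m : ℝ := (Fintype.card {x // x ∉ A} : ℝ) with hmdef
  set T := ∑ x, ∑ y, |c x y| ^ 3 with hT
  have h3 : ∀ x y, 0 ≤ |c x y| ^ 3 := fun x y => by positivity
  have hsub : ∀ f : α → ℝ, (∀ x, 0 ≤ f x) → ∑ x ∈ A, f x ≤ ∑ x, f x := fun f hf =>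
    Finset.sum_le_sum_of_subset_of_nonneg (Finset.subset_univ _) fun x _ _ => hf x
  have hd : ∑ x : {x // x ∉ A}, ∑ y : {x // x ∉ A}, |c x y| ^ 3 ≤ T :=
    sum_sum_subtype_not_mem_le A h3
  have hR : ∑ x : {x // x ∉ A}, |∑ q ∈ A, c x q| ^ 3 ≤ 16 * T := by
    refine (sum_subtype_not_mem_le A (f := fun x => |∑ q ∈ A, c x q| ^ 3)
      fun x => by positivity).trans ?_
    rw [hT, Finset.mul_sum]
    refine Finset.sum_le_sum fun x _ => (abs_sum_cube_le hA _).trans ?_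
    exact mul_le_mul_of_nonneg_left (hsub _ (h3 x)) (by norm_num)
  have hC : ∑ y : {x // x ∉ A}, |∑ p ∈ A, c p y| ^ 3 ≤ 16 * T := by
    refine (sum_subtype_not_mem_le A (f := fun y => |∑ p ∈ A, c p y| ^ 3)
      fun x => by positivity).trans ?_
    rw [hT, Finset.sum_comm, Finset.mul_sum]
    refine Finset.sum_le_sum fun x _ => (abs_sum_cube_le hA _).trans ?_
    exact mul_le_mul_of_nonneg_left (hsub _ fun y => h3 y x) (by norm_num)
  have hG : |∑ p ∈ A, ∑ q ∈ A, c p q| ^ 3 ≤ 256 * T := by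
    refine (abs_sum_cube_le hA _).trans ?_
    have : ∑ p ∈ A, |∑ q ∈ A, c p q| ^ 3 ≤ 16 * T := by
      rw [hT, Finset.mul_sum]
      refine (Finset.sum_le_sum fun p _ => abs_sum_cube_le hA _).trans ?_
      refine (Finset.sum_le_sum fun p _ => mul_le_mul_of_nonneg_left (hsub _ (h3 p))
        (by norm_num : (0 : ℝ) ≤ 16)).trans ?_
      exact hsub _ fun x => mul_nonneg (by norm_num) (Finset.sum_nonneg fun y _ => h3 x y)
    linarith
  have hpt : ∀ x y : {x // x ∉ A}, |recenter c A x y| ^ 3 ≤ 144 / 121 * |c x y| ^ 3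
      + (1296 / m ^ 3 * |∑ q ∈ A, c x q| ^ 3 + 1296 / m ^ 3 * |∑ p ∈ A, c p y| ^ 3
        + 1296 / m ^ 6 * |∑ p ∈ A, ∑ q ∈ A, c p q| ^ 3) := fun x y => by
    have h1 : |recenter c A x y| ^ 3 ≤ (|c x y| + |(∑ q ∈ A, c x q) / m
        + (∑ p ∈ A, c p y) / m + (∑ p ∈ A, ∑ q ∈ A, c p q) / m ^ 2|) ^ 3 :=
      pow_le_pow_left₀ (abs_nonneg _) (abs_add_le _ _) 3
    refine h1.trans ((add_cube_le (abs_nonneg _) (abs_nonneg _)).trans ?_)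
    have h2 := abs_add_three_cube_le ((∑ q ∈ A, c x q) / m) ((∑ p ∈ A, c p y) / m)
      ((∑ p ∈ A, ∑ q ∈ A, c p q) / m ^ 2)
    simp only [abs_div, abs_of_pos hm, abs_of_pos (pow_pos hm 2), div_pow, ← pow_mul] at h2
    refine (add_le_add_right (mul_le_mul_of_nonneg_left h2 (by norm_num)) _).trans (le_of_eq ?_)
    ring
  refine (Finset.sum_le_sum fun x _ => Finset.sum_le_sum fun y _ => hpt x y).trans ?_
  simp only [Finset.sum_add_distrib, ← Finset.mul_sum, Finset.sum_const, Finset.card_univ,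
    nsmul_eq_mul, ← hmdef]
  have e : ∀ X : ℝ, 1296 / m ^ 3 * (m * X) = 1296 / m ^ 2 * X := fun X => by field_simp
  have e' : ∀ X : ℝ, 1296 / m ^ 6 * (m * (m * X)) = 1296 / m ^ 4 * X := fun X => by field_simp
  rw [e, e, e']
  have e1 : (144 / 121 + 144 * (288 / m ^ 2 + 2304 / m ^ 4)) * T = 144 / 121 * T
      + (1296 / m ^ 2 * (16 * T) + 1296 / m ^ 2 * (16 * T) + 1296 / m ^ 4 * (256 * T)) := by ring
  rw [e1]
  gcongr

end Deletion

section DeletedPermutation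

set_option linter.unusedSectionVars false

/-- The Kolmogorov distance bound for all normalized centered arrays indexed by `α`. -/
def HasKolmogorovBound (α : Type) [Fintype α] [DecidableEq α] : Prop :=
  ∀ c : α → α → ℝ, IsCentered c → ∑ x, ∑ y, c x y ^ 2 = Fintype.card α - 1 →
    ∀ z, |permMean (fun ρ => if permSum c ρ ≤ z then 1 else 0) - stdNormalCDF z|
      ≤ 451 / Fintype.card α * ∑ x, ∑ y, |c x y| ^ 3

theorem IsSpread.mono {α : Type*} [Fintype α] [DecidableEq α] {S : Perm α → ℝ} {A B A' B' : ℝ}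
    (h : IsSpread S A B) (hA : A ≤ A') (hB : B ≤ B') : IsSpread S A' B' := fun t l hl =>
  (h t l hl).trans (add_le_add (mul_le_mul_of_nonneg_right hA hl) hB)

theorem sq_le_abs_cube {s : ℝ} (hs : 0 < s) (x : ℝ) :
    x ^ 2 ≤ 2 / 3 / s * |x| ^ 3 + s ^ 2 / 3 := by
  have h : 0 ≤ (|x| - s) ^ 2 * (2 * |x| + s) :=
    mul_nonneg (sq_nonneg _) (by linarith [abs_nonneg x])
  have e : 2 / 3 / s * |x| ^ 3 + s ^ 2 / 3 - x ^ 2 = (|x| - s) ^ 2 * (2 * |x| + s) / (3 * s) := by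
    rw [← sq_abs x]
    field_simp
    ring
  have := div_nonneg h (by linarith : 0 ≤ 3 * s)
  linarith

variable {α : Type} [Fintype α] [DecidableEq α] {c : α → α → ℝ}

theorem card_ge_of_sum_cube_le (hn : 2 ≤ Fintype.card α)
    (hQ : ∑ x, ∑ y, c x y ^ 2 = Fintype.card α - 1)
    (hβ : ∑ x, ∑ y, |c x y| ^ 3 ≤ Fintype.card α / 451) : (20000 : ℝ) ≤ Fintype.card α := by
  have hn' : (2 : ℝ) ≤ Fintype.card α := by exact_mod_cast hn
  have h : ∑ x, ∑ y, c x y ^ 2 ≤ ∑ x : α, ∑ y : α,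
      (2 / 3 / (1 / 100) * |c x y| ^ 3 + (1 / 100) ^ 2 / 3) :=
    Finset.sum_le_sum fun x _ => Finset.sum_le_sum fun y _ => sq_le_abs_cube (by norm_num) _
  simp only [Finset.sum_add_distrib, ← Finset.mul_sum, Finset.sum_const, Finset.card_univ,
    nsmul_eq_mul] at h
  by_contra! hlt
  nlinarith

theorem sum_row_sq_le {A : Finset α} (hA : A.card ≤ 4)
    (hβ : ∑ x, ∑ y, |c x y| ^ 3 ≤ Fintype.card α / 451) :
    ∑ p ∈ A, ∑ y, c p y ^ 2 ≤ 0.0282 * Fintype.card α := by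
  have h : ∑ p ∈ A, ∑ y, c p y ^ 2 ≤ ∑ p ∈ A, ∑ y : α,
      (2 / 3 / (1 / 10) * |c p y| ^ 3 + (1 / 10) ^ 2 / 3) :=
    Finset.sum_le_sum fun x _ => Finset.sum_le_sum fun y _ => sq_le_abs_cube (by norm_num) _
  have h1 : ∑ p ∈ A, ∑ y, |c p y| ^ 3 ≤ ∑ p, ∑ y, |c p y| ^ 3 :=
    Finset.sum_le_sum_of_subset_of_nonneg (Finset.subset_univ _) fun x _ _ =>
      Finset.sum_nonneg fun y _ => by positivity
  simp only [Finset.sum_add_distrib, ← Finset.mul_sum, Finset.sum_const, Finset.card_univ,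
    nsmul_eq_mul] at h
  have hA' : (A.card : ℝ) ≤ 4 := by exact_mod_cast hA
  have h2 := mul_le_mul_of_nonneg_right hA' (Nat.cast_nonneg (α := ℝ) (Fintype.card α))
  norm_num at h ⊢
  linarith

theorem card_sub_four_le_card_subtype {A : Finset α} (hA : A.card ≤ 4) :
    (Fintype.card α : ℝ) - 4 ≤ Fintype.card {x // x ∉ A} := by
  have h := Fintype.card_subtype_compl (fun x => x ∈ A)
  have h1 : Fintype.card {x // x ∈ A} = A.card := Fintype.card_coe A
  have h2 : Fintype.card α ≤ Fintype.card {x // x ∉ A} + 4 := by omega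
  have h3 : (Fintype.card α : ℝ) ≤ Fintype.card {x // x ∉ A} + 4 := by exact_mod_cast h2
  linarith

theorem card_subtype_lt {A : Finset α} (hne : A.Nonempty) :
    Fintype.card {x // x ∉ A} < Fintype.card α := by
  obtain ⟨a, ha⟩ := hne
  exact Fintype.card_subtype_lt (x := a) (by simpa using ha)

theorem le_sum_recenter_sq_of_card (hc : IsCentered c)
    (hQ : ∑ x, ∑ y, c x y ^ 2 = Fintype.card α - 1)
    (hβ : ∑ x, ∑ y, |c x y| ^ 3 ≤ Fintype.card α / 451)
    (hn : (20000 : ℝ) ≤ Fintype.card α) {A : Finset α} (hA : A.card ≤ 4) (hne : A.Nonempty) :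
    0.943 * ((Fintype.card {x // x ∉ A} : ℝ) - 1) ≤ ∑ x, ∑ y, recenter c A x y ^ 2 := by
  have hm := card_sub_four_le_card_subtype hA
  have hmn : (Fintype.card {x // x ∉ A} : ℝ) ≤ Fintype.card α := by
    exact_mod_cast (card_subtype_lt hne).le
  have h := le_sum_recenter_sq hc hA (by linarith)
  have h1 := sum_row_sq_le hA hβ
  have h2 := sum_row_sq_le (c := fun x y => c y x) hA (by rwa [Finset.sum_comm])
  set m : ℝ := (Fintype.card {x // x ∉ A} : ℝ)
  set R := ∑ p ∈ A, ∑ y, c p y ^ 2 + ∑ q ∈ A, ∑ x, c x q ^ 2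
  have h4 : 4 / m ≤ 0.00021 := by
    rw [div_le_iff₀ (by linarith)]
    norm_num
    linarith
  have hR0 : 0 ≤ R := by positivity
  have h5 := mul_le_mul_of_nonneg_right h4 hR0
  rw [hQ] at h
  norm_num at h1 h2 h5 ⊢
  linarith

theorem sum_recenter_cube_le_of_card (hn : (20000 : ℝ) ≤ Fintype.card α) {A : Finset α}
    (hA : A.card ≤ 4) :
    ∑ x, ∑ y, |recenter c A x y| ^ 3 ≤ 1.1911 * ∑ x, ∑ y, |c x y| ^ 3 := by
  have hm := card_sub_four_le_card_subtype hA
  refine (sum_recenter_cube_le c hA (by linarith)).trans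
    (mul_le_mul_of_nonneg_right ?_ (by positivity))
  set m : ℝ := (Fintype.card {x // x ∉ A} : ℝ)
  have hm' : (10000 : ℝ) ≤ m := by linarith
  have h2 : 288 / m ^ 2 ≤ 288 / 10000 ^ 2 := by gcongr
  have h4 : 2304 / m ^ 4 ≤ 2304 / 10000 ^ 4 := by gcongr
  norm_num at h2 h4 ⊢
  linarith

theorem isSpread_permSum_restrict (hc : IsCentered c)
    (hQ : ∑ x, ∑ y, c x y ^ 2 = Fintype.card α - 1)
    (hβ : ∑ x, ∑ y, |c x y| ^ 3 ≤ Fintype.card α / 451)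
    (hn : (20000 : ℝ) ≤ Fintype.card α) {A : Finset α} (hA : A.card ≤ 4) (hne : A.Nonempty)
    (hK : HasKolmogorovBound {x // x ∉ A}) :
    IsSpread (permSum fun x y : {x // x ∉ A} => c x y) (21 / 50)
      (902 * 1.4 * ((∑ x, ∑ y, |c x y| ^ 3) / Fintype.card α)) := by
  have hm := card_sub_four_le_card_subtype hA
  have hlow := le_sum_recenter_sq_of_card hc hQ hβ hn hA hne
  have hcube := sum_recenter_cube_le_of_card (c := c) hn hA
  have hβ0 : 0 ≤ ∑ x, ∑ y, |c x y| ^ 3 := by positivity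
  set m : ℝ := (Fintype.card {x // x ∉ A} : ℝ) with hmdef
  have hm0 : (10000 : ℝ) ≤ m := by linarith
  have hr := isCentered_recenter hc A (by linarith : m ≠ 0)
  set Q := ∑ x, ∑ y, recenter c A x y ^ 2 with hQdef
  set σ := √(Q / (m - 1)) with hσdef
  have hσ2 : σ ^ 2 = Q / (m - 1) := Real.sq_sqrt (div_nonneg (by positivity) (by linarith))
  have hσ : 0.97 ≤ σ := by
    refine Real.le_sqrt_of_sq_le ?_
    rw [le_div_iff₀ (by linarith)]
    norm_num at hlow ⊢
    linarith
  have hσ0 : 0 < σ := lt_of_lt_of_le (by norm_num) hσ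
  have hn0 : (0 : ℝ) < Fintype.card α := by linarith
  have hcen : IsCentered fun x y => recenter c A x y / σ :=
    ⟨fun x => by rw [← Finset.sum_div, hr.row, zero_div],
      fun y => by rw [← Finset.sum_div, hr.col, zero_div]⟩
  have hnorm : ∑ x, ∑ y, (recenter c A x y / σ) ^ 2 = m - 1 := by
    simp only [div_pow, ← Finset.sum_div]
    rw [← hQdef, div_eq_iff (by positivity), hσ2, mul_div_cancel₀ _ (by linarith)]
  have hspread := isSpread_of_kolmogorov (s := (∑ p ∈ A, ∑ q ∈ A, c p q) / m) hσ0
    (hK _ hcen hnorm)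
  have e : (fun ρ => permSum (recenter c A) ρ + (∑ p ∈ A, ∑ q ∈ A, c p q) / m)
      = permSum fun x y : {x // x ∉ A} => c x y :=
    funext fun ρ => (permSum_restrict hc A (by linarith : m ≠ 0) ρ).symm
  rw [e] at hspread
  refine hspread.mono ?_ ?_
  · rw [div_le_iff₀ hσ0]
    norm_num at hσ ⊢
    linarith
  · simp only [abs_div, abs_of_pos hσ0, div_pow, ← Finset.sum_div]
    have h3 : (0.9126 : ℝ) ≤ σ ^ 3 :=
      le_trans (by norm_num) (pow_le_pow_left₀ (by norm_num) hσ 3)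
    have h4 : 0.912 * (Fintype.card α : ℝ) ≤ m * σ ^ 3 := by
      have := mul_le_mul_of_nonneg_left h3 (by linarith : 0 ≤ m)
      norm_num at this ⊢
      linarith
    have e : 2 * (451 / m * ((∑ x, ∑ y, |recenter c A x y| ^ 3) / σ ^ 3))
        = 902 * ((∑ x, ∑ y, |recenter c A x y| ^ 3) / (m * σ ^ 3)) := by
      rw [div_mul_div_comm]
      ring
    rw [e, mul_assoc, ← mul_div_assoc 1.4]
    refine mul_le_mul_of_nonneg_left ?_ (by norm_num)
    rw [div_le_div_iff₀ (by positivity) hn0]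
    calc (∑ x, ∑ y, |recenter c A x y| ^ 3) * (Fintype.card α : ℝ)
        ≤ (1.1911 * ∑ x, ∑ y, |c x y| ^ 3) * Fintype.card α :=
          mul_le_mul_of_nonneg_right hcube hn0.le
      _ ≤ 1.4 * (∑ x, ∑ y, |c x y| ^ 3) * (0.912 * (Fintype.card α : ℝ)) := by
          have := mul_nonneg hβ0 hn0.le
          norm_num
          linarith
      _ ≤ 1.4 * (∑ x, ∑ y, |c x y| ^ 3) * (m * σ ^ 3) :=
          mul_le_mul_of_nonneg_left h4 (by positivity)

theorem permMean_abs_permSum_restrict_le (hc : IsCentered c)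
    (hQ : ∑ x, ∑ y, c x y ^ 2 = Fintype.card α - 1)
    (hn : (20000 : ℝ) ≤ Fintype.card α) {A : Finset α} (hA : A.card ≤ 4) :
    permMean (fun ρ => 2 * |permSum (fun x y : {x // x ∉ A} => c x y) ρ|) ≤ 2.07 := by
  have hm := card_sub_four_le_card_subtype hA
  have hm2 : 2 ≤ Fintype.card {x // x ∉ A} := by
    have : (2 : ℝ) ≤ Fintype.card {x // x ∉ A} := by linarith
    exact_mod_cast this
  set m : ℝ := (Fintype.card {x // x ∉ A} : ℝ) with hmdef
  set G := ∑ p ∈ A, ∑ q ∈ A, c p q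
  have hmean : permMean (fun ρ => permSum (recenter c A) ρ ^ 2)
      = (∑ x, ∑ y, recenter c A x y ^ 2) / (m - 1) :=
    permMean_permSum_sq (isCentered_recenter hc A (by linarith : m ≠ 0)) hm2
  have hle := sum_recenter_sq_le hc A (by linarith : m ≠ 0)
  have hG : |G| / m ≤ 0.0301 := by
    have h1 : G ^ 2 ≤ 4 * ∑ p ∈ A, (∑ q ∈ A, c p q) ^ 2 := sq_sum_le_four_mul hA _
    have h2 : ∑ p ∈ A, (∑ q ∈ A, c p q) ^ 2 ≤ ∑ p ∈ A, 4 * ∑ q, c p q ^ 2 :=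
      Finset.sum_le_sum fun p _ => (sq_sum_le_four_mul hA _).trans
        (mul_le_mul_of_nonneg_left (Finset.sum_le_sum_of_subset_of_nonneg (Finset.subset_univ _)
          fun _ _ _ => sq_nonneg _) (by norm_num))
    have h3 : ∑ p ∈ A, ∑ q, c p q ^ 2 ≤ ∑ p, ∑ q, c p q ^ 2 :=
      Finset.sum_le_sum_of_subset_of_nonneg (Finset.subset_univ _)
          fun _ _ _ => Finset.sum_nonneg fun _ _ => sq_nonneg _
    rw [← Finset.mul_sum] at h2
    rw [div_le_iff₀ (by linarith)]
    refine abs_le_of_sq_le_sq ?_ (by positivity)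
    rw [mul_pow]
    nlinarith
  have hpt : ∀ ρ : Perm {x // x ∉ A}, 2 * |permSum (fun x y : {x // x ∉ A} => c x y) ρ|
      ≤ permSum (recenter c A) ρ ^ 2 + 1.0602 := fun ρ => by
    have h0 : permSum (fun x y : {x // x ∉ A} => c x y) ρ = permSum (recenter c A) ρ + G / m :=
      permSum_restrict hc A (by linarith : m ≠ 0) ρ
    rw [h0]
    have h1 := abs_add_le (permSum (recenter c A) ρ) (G / m)
    rw [abs_div, abs_of_pos (by linarith : 0 < m)] at h1
    have h2 := sq_nonneg (|permSum (recenter c A) ρ| - 1)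
    rw [sub_sq, sq_abs] at h2
    norm_num at hG ⊢
    linarith
  refine (permMean_mono hpt).trans ?_
  rw [permMean_add, permMean_const, hmean]
  have : (∑ x, ∑ y, recenter c A x y ^ 2) / (m - 1) ≤ 1.001 := by
    rw [div_le_iff₀ (by linarith)]
    norm_num at hle ⊢
    linarith
  norm_num at this ⊢
  linarith

end DeletedPermutation

section LocalBound

set_option linter.unusedSectionVars false

variable {α : Type*} [Fintype α] [DecidableEq α] {c : α → α → ℝ}

theorem permMean_apply (φ : α → ℝ) (i : α) :
    permMean (fun π : Perm α => φ (π i)) = (∑ y, φ y) / Fintype.card α := by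
  have h : ∀ k, permMean (fun π : Perm α => φ (π k)) = permMean fun π : Perm α => φ (π i) :=
    fun k => by
      rw [← permMean_comp_mul_right (swap i k) fun π : Perm α => φ (π i)]
      simp
  have h1 : permMean (fun π : Perm α => ∑ k, φ (π k)) = ∑ y, φ y := by
    simp only [sum_apply_perm, permMean_const]
  rw [permMean_sum] at h1
  simp only [h, Finset.sum_const, Finset.card_univ, nsmul_eq_mul] at h1
  have : Nonempty α := ⟨i⟩
  rw [← h1, mul_div_cancel_left₀]
  exact_mod_cast Fintype.card_ne_zero

theorem permSum_mul_ofSubtype_mul (c : α → α → ℝ) (A : Finset α) (π : Perm α)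
    (ρ : Perm {x // x ∉ A}) {τ : Perm α} (hτ : ∀ x ∉ A, τ x = x) :
    permSum c (π * Perm.ofSubtype ρ * τ)
      = permSum (fun x y : {x // x ∉ A} => c x (π y)) ρ + ∑ x ∈ A, c x (π (τ x)) := by
  have hA : ∀ x ∈ A, τ x ∈ A := fun x hx => by
    by_contra h
    exact h (by rwa [τ.injective (hτ _ h)])
  have h := sum_subtype_not_mem A fun x => c x ((π * Perm.ofSubtype ρ * τ) x)
  have h1 : ∀ x : {x // x ∉ A}, (π * Perm.ofSubtype ρ * τ) x = π (ρ x) := fun x => by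
    rw [Perm.mul_apply, Perm.mul_apply, hτ x x.2, Perm.ofSubtype_apply_coe]
  have h2 : ∑ x ∈ A, c x ((π * Perm.ofSubtype ρ * τ) x) = ∑ x ∈ A, c x (π (τ x)) :=
    Finset.sum_congr rfl fun x hx => by
      rw [Perm.mul_apply, Perm.mul_apply, Perm.ofSubtype_apply_of_not_mem]
      simpa using hA x hx
  simp only [h1, h2] at h
  rw [permSum, permSum, h]
  ring

theorem sum_abs_insert_le (a : α) (s : Finset α) (f : α → ℝ) :
    ∑ x ∈ insert a s, |f x| ≤ |f a| + ∑ x ∈ s, |f x| := by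
  by_cases h : a ∈ s
  · rw [Finset.insert_eq_of_mem h]
    linarith [abs_nonneg (f a)]
  · rw [Finset.sum_insert h]

theorem abs_sum_four_le (i j p q : α) (f : α → ℝ) :
    |∑ x ∈ {i, j, p, q}, f x| ≤ |f i| + |f j| + |f p| + |f q| := by
  have h := Finset.abs_sum_le_sum_abs f {i, j, p, q}
  have h1 := sum_abs_insert_le i {j, p, q} f
  have h2 := sum_abs_insert_le j {p, q} f
  have h3 := sum_abs_insert_le p {q} f
  rw [Finset.sum_singleton] at h3
  linarith

theorem abs_sum_four_sub_le {i j : α} (hij : i ≠ j) (p q : α) (f : α → ℝ) :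
    |∑ x ∈ {i, j, p, q}, f x - f i - f j| ≤ |f p| + |f q| := by
  have hs : ({i, j} : Finset α) ⊆ {i, j, p, q} := by
    intro x hx
    simp only [Finset.mem_insert, Finset.mem_singleton] at hx ⊢
    tauto
  rw [← Finset.sum_sdiff hs, Finset.sum_pair hij]
  have hs' : ({i, j, p, q} : Finset α) \ {i, j} ⊆ {p, q} := by
    intro x hx
    simp only [Finset.mem_sdiff, Finset.mem_insert, Finset.mem_singleton] at hx ⊢
    tauto
  have h := Finset.abs_sum_le_sum_abs f (({i, j, p, q} : Finset α) \ {i, j})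
  have h1 := Finset.sum_le_sum_of_subset_of_nonneg hs' fun x _ _ => abs_nonneg (f x)
  have h2 := sum_abs_insert_le p {q} f
  rw [Finset.sum_singleton] at h2
  have e : ∀ X : ℝ, X + (f i + f j) - f i - f j = X := fun X => by ring
  rw [e]
  linarith

theorem sq_mul_le_cubes {u t : ℝ} (hu : 0 ≤ u) (ht : 0 ≤ t) :
    u ^ 2 * t ≤ 2 / 3 * u ^ 3 + 1 / 3 * t ^ 3 := by
  nlinarith [mul_nonneg (sq_nonneg (u - t)) (by linarith : 0 ≤ 2 * u + t)]

theorem sq_alternating_mul_le (a b d e t : ℝ) :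
    (a + b - d - e) ^ 2 * |t|
      ≤ 8 / 3 * (|a| ^ 3 + |b| ^ 3 + |d| ^ 3 + |e| ^ 3) + 16 / 3 * |t| ^ 3 := by
  have h : (a + b - d - e) ^ 2 ≤ 4 * (|a| ^ 2 + |b| ^ 2 + |d| ^ 2 + |e| ^ 2) := by
    simp only [sq_abs]
    nlinarith [sq_nonneg (a - b), sq_nonneg (a + d), sq_nonneg (a + e), sq_nonneg (b + d),
      sq_nonneg (b + e), sq_nonneg (d - e)]
  have h1 := mul_le_mul_of_nonneg_right h (abs_nonneg t)
  have ha := sq_mul_le_cubes (abs_nonneg a) (abs_nonneg t)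
  have hb := sq_mul_le_cubes (abs_nonneg b) (abs_nonneg t)
  have hd := sq_mul_le_cubes (abs_nonneg d) (abs_nonneg t)
  have he := sq_mul_le_cubes (abs_nonneg e) (abs_nonneg t)
  linarith

theorem abs_permMean_local_le {i j p q : α} (hij : i ≠ j) {f g : ℝ → ℝ} {K : ℝ}
    (hf : ∀ w, HasDerivAt f (g w) w) (hK0 : 0 ≤ K)
    (hK : ∀ (π : Perm α) a,
      |permMean (fun ρ => g (permSum (fun x y : {x // x ∉ ({i, j, p, q} : Finset α)} =>
          c x (π y)) ρ + a))
        - permMean (fun ρ => g (permSum (fun x y : {x // x ∉ ({i, j, p, q} : Finset α)} =>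
          c x (π y)) ρ))| ≤ |a| * K) :
    |permMean (fun π => swapDiff c i j π ^ 2 * g (permSum c (π * pairPerm i j p q))
        - swapDiff c i j π * (f (permSum c π) - f (permSum c π - swapDiff c i j π)))|
      ≤ K / Fintype.card α * (208 / 3 * (∑ y, |c i y| ^ 3 + ∑ y, |c j y| ^ 3)
          + 32 / 3 * (∑ y, |c p y| ^ 3 + ∑ y, |c q y| ^ 3)) := by
  set A : Finset α := {i, j, p, q} with hA
  set τ := pairPerm i j p q with hτdef
  have hτ : ∀ x ∉ A, τ x = x := fun x hx => by
    simp only [hA, Finset.mem_insert, Finset.mem_singleton, not_or] at hx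
    exact pairPerm_apply_of_ne hx.1 hx.2.1 hx.2.2.1 hx.2.2.2
  set V : Perm α → ℝ := fun π => |c i (π i)| + |c j (π j)| + |c i (π j)| + |c j (π i)|
    + |c p (π p)| + |c q (π q)| with hV
  set a : Perm α → ℝ := fun π => ∑ x ∈ A, c x (π (τ x)) with ha
  rw [← permMean_average (fun ρ : Perm {x // x ∉ A} => Perm.ofSubtype ρ)]
  have hiA : i ∈ A := by simp [hA]
  have hjA : j ∈ A := by simp [hA]
  have hfix : ∀ (ρ : Perm {x // x ∉ A}) x, x ∈ A → Perm.ofSubtype ρ x = x := fun ρ x hx =>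
    Perm.ofSubtype_apply_of_not_mem ρ (by simpa using hx)
  have hD : ∀ (π : Perm α) (ρ : Perm {x // x ∉ A}),
      swapDiff c i j (π * Perm.ofSubtype ρ) = swapDiff c i j π := fun π ρ => by
    simp only [swapDiff, Perm.mul_apply, hfix ρ i hiA, hfix ρ j hjA]
  have hW : ∀ (π : Perm α) (ρ : Perm {x // x ∉ A}), permSum c (π * Perm.ofSubtype ρ)
      = permSum (fun x y : {x // x ∉ A} => c x (π y)) ρ + ∑ x ∈ A, c x (π x) := fun π ρ => by
    simpa using permSum_mul_ofSubtype_mul c A π ρ (τ := 1) fun _ _ => rfl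
  have hWτ : ∀ (π : Perm α) (ρ : Perm {x // x ∉ A}), permSum c (π * Perm.ofSubtype ρ * τ)
      = permSum (fun x y : {x // x ∉ A} => c x (π y)) ρ + a π := fun π ρ =>
    permSum_mul_ofSubtype_mul c A π ρ hτ
  have hloc : ∀ π : Perm α, |permMean (fun ρ : Perm {x // x ∉ A} =>
      swapDiff c i j (π * Perm.ofSubtype ρ) ^ 2 * g (permSum c (π * Perm.ofSubtype ρ * τ))
        - swapDiff c i j (π * Perm.ofSubtype ρ) * (f (permSum c (π * Perm.ofSubtype ρ))
          - f (permSum c (π * Perm.ofSubtype ρ) - swapDiff c i j (π * Perm.ofSubtype ρ))))|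
      ≤ swapDiff c i j π ^ 2 * ((|a π| + V π) * K) := fun π => by
    simp only [hD, hW, hWτ, add_sub_assoc]
    rw [permMean_sub, permMean_const_mul, permMean_const_mul, permMean_sub]
    have h1 := abs_sum_four_le i j p q fun x => c x (π x)
    have h2 := abs_sum_four_sub_le hij p q fun x => c x (π x)
    refine abs_stein_increment_le hf hK0 (hK π) ?_ ?_
    · simp only [hV]
      linarith [abs_nonneg (c i (π j)), abs_nonneg (c j (π i))]
    · have e : ∑ x ∈ A, c x (π x) - swapDiff c i j π
          = (∑ x ∈ A, c x (π x) - c i (π i) - c j (π j)) + c i (π j) + c j (π i) := by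
        rw [swapDiff]; ring
      rw [e]
      simp only [hV]
      linarith [abs_add_three (∑ x ∈ A, c x (π x) - c i (π i) - c j (π j)) (c i (π j))
        (c j (π i)), abs_nonneg (c i (π i)), abs_nonneg (c j (π j))]
  have hpt : ∀ π : Perm α, swapDiff c i j π ^ 2 * ((|a π| + V π) * K)
      ≤ K * (32 * (|c i (π i)| ^ 3 + |c j (π j)| ^ 3 + |c i (π j)| ^ 3 + |c j (π i)| ^ 3)
        + 16 / 3 * (|c i (π (τ i))| ^ 3 + |c j (π (τ j))| ^ 3 + |c p (π (τ p))| ^ 3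
          + |c q (π (τ q))| ^ 3 + |c p (π p)| ^ 3 + |c q (π q)| ^ 3)) := fun π => by
    have h1 : |a π| ≤ _ := abs_sum_four_le i j p q fun x => c x (π (τ x))
    have h2 := fun t => sq_alternating_mul_le (c i (π i)) (c j (π j)) (c i (π j)) (c j (π i)) t
    have h3 : swapDiff c i j π ^ 2 * (|a π| + V π) ≤ _ := mul_le_mul_of_nonneg_left
      (add_le_add_left h1 (V π)) (sq_nonneg _)
    rw [← mul_assoc, mul_comm]
    refine mul_le_mul_of_nonneg_left (h3.trans ?_) hK0
    simp only [hV, swapDiff, mul_add]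
    linarith [h2 (c i (π i)), h2 (c j (π j)), h2 (c i (π j)), h2 (c j (π i)), h2 (c p (π p)),
      h2 (c q (π q)), h2 (c i (π (τ i))), h2 (c j (π (τ j))), h2 (c p (π (τ p))),
      h2 (c q (π (τ q)))]
  refine (abs_permMean_le _).trans ((permMean_mono fun π => (hloc π).trans (hpt π)).trans ?_)
  have hm : ∀ x y, permMean (fun π : Perm α => |c x (π y)| ^ 3)
      = (∑ y, |c x y| ^ 3) / Fintype.card α := fun x y => permMean_apply (fun z => |c x z| ^ 3) y
  simp only [permMean_const_mul, permMean_add, hm]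
  refine le_of_eq ?_
  ring

end LocalBound

section Induction

set_option linter.unusedSectionVars false

theorem sum_offDiag_sum_offDiag_le {α : Type*} [Fintype α] [DecidableEq α] {r : α → ℝ}
    (hr : ∀ x, 0 ≤ r x) {s t : ℝ} (hs : 0 ≤ s) (ht : 0 ≤ t) :
    ∑ x ∈ (univ : Finset α).offDiag, ∑ y ∈ (univ : Finset α).offDiag,
        (s * (r x.1 + r x.2) + t * (r y.1 + r y.2))
      ≤ 2 * (s + t) * (Fintype.card α : ℝ) ^ 3 * ∑ x, r x := by
  have h0 : ∀ x y : α × α, 0 ≤ s * (r x.1 + r x.2) + t * (r y.1 + r y.2) := fun x y =>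
    add_nonneg (mul_nonneg hs (add_nonneg (hr _) (hr _)))
      (mul_nonneg ht (add_nonneg (hr _) (hr _)))
  refine (Finset.sum_le_sum fun x _ => Finset.sum_le_sum_of_subset_of_nonneg
    (Finset.subset_univ _) fun y _ _ => h0 x y).trans ?_
  refine (Finset.sum_le_sum_of_subset_of_nonneg (Finset.subset_univ _) fun x _ _ =>
    Finset.sum_nonneg fun y _ => h0 x y).trans (le_of_eq ?_)
  simp only [Fintype.sum_prod_type, Finset.sum_add_distrib, ← Finset.mul_sum, Finset.sum_const,
    Finset.card_univ, nsmul_eq_mul, Fintype.card_prod, Nat.cast_mul]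
  ring

theorem abs_permMean_stein_le {α : Type*} [Fintype α] [DecidableEq α] {c : α → α → ℝ}
    (hc : IsCentered c) (hn : 2 ≤ Fintype.card α)
    (hQ : ∑ x, ∑ y, c x y ^ 2 = Fintype.card α - 1) {f g : ℝ → ℝ} {K : ℝ}
    (hf : ∀ w, HasDerivAt f (g w) w) (hK0 : 0 ≤ K)
    (hK : ∀ A : Finset α, A.card ≤ 4 → A.Nonempty → ∀ (π : Perm α) a,
      |permMean (fun ρ => g (permSum (fun x y : {x // x ∉ A} => c x (π y)) ρ + a))
        - permMean (fun ρ => g (permSum (fun x y : {x // x ∉ A} => c x (π y)) ρ))| ≤ |a| * K) :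
    |permMean (fun π => g (permSum c π)) - permMean (fun π => permSum c π * f (permSum c π))|
      ≤ 40 * K * (∑ x, ∑ y, |c x y| ^ 3) / (Fintype.card α - 1) := by
  have hn2 : (2 : ℝ) ≤ Fintype.card α := by exact_mod_cast hn
  set n : ℝ := (Fintype.card α : ℝ) with hndef
  have hdiag : ∀ F : α → α → ℝ, (∀ k, F k k = 0) →
      ∑ x ∈ (univ : Finset α).offDiag, F x.1 x.2 = ∑ k, ∑ l, F k l := fun F hF =>
    offDiag_sum_of_diag_eq_zero hF
  have hD0 : ∀ k (π : Perm α), swapDiff c k k π = 0 := fun k π => by rw [swapDiff]; ring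
  have hsq : ∑ x ∈ (univ : Finset α).offDiag, permMean (fun π => swapDiff c x.1 x.2 π ^ 2)
      = 4 * n := by
    rw [hdiag fun i j => permMean fun π => swapDiff c i j π ^ 2]
    · have h := stein_identity hc fun w => w
      have h2 := permMean_permSum_sq hc hn
      rw [hQ, div_self (by linarith)] at h2
      simp only [sub_sub_cancel, ← pow_two] at h
      rw [← h, h2, mul_one]
    · simp [hD0, permMean_const]
  have hst : ∑ x ∈ (univ : Finset α).offDiag, permMean (fun π => swapDiff c x.1 x.2 π
      * (f (permSum c π) - f (permSum c π - swapDiff c x.1 x.2 π)))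
      = 4 * n * permMean fun π => permSum c π * f (permSum c π) := by
    rw [stein_identity hc f, hdiag fun i j => permMean fun π => swapDiff c i j π
      * (f (permSum c π) - f (permSum c π - swapDiff c i j π))]
    simp [hD0, permMean_const]
  have hcard : ((univ : Finset α).offDiag.card : ℝ) = n * (n - 1) := by
    rw [Finset.offDiag_card, Finset.card_univ, Nat.cast_sub (Nat.le_mul_self _)]
    push_cast
    ring
  have hg : ∀ x ∈ (univ : Finset α).offDiag, ∑ y ∈ (univ : Finset α).offDiag,
      permMean (fun π => swapDiff c x.1 x.2 π ^ 2 * g (permSum c (π * pairPerm x.1 x.2 y.1 y.2)))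
      = n * (n - 1) * permMean (fun π => g (permSum c π))
        * permMean (fun π => swapDiff c x.1 x.2 π ^ 2) := fun x hx => by
    have hx' := (Finset.mem_offDiag.mp hx).2.2
    have h1 := sum_offDiag_permMean_mul hx'
      (fun a b => (c x.1 a + c x.2 b - c x.1 b - c x.2 a) ^ 2) fun π => g (permSum c π)
    have h2 := card_offDiag_mul_permMean hx'
      (fun a b => (c x.1 a + c x.2 b - c x.1 b - c x.2 a) ^ 2)
    rw [← h2] at h1
    refine h1.trans ?_
    simp only [swapDiff]
    ring
  have hid : 4 * n * (n * (n - 1)) * (permMean (fun π => g (permSum c π))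
        - permMean fun π => permSum c π * f (permSum c π))
      = ∑ x ∈ (univ : Finset α).offDiag, ∑ y ∈ (univ : Finset α).offDiag,
        permMean fun π => swapDiff c x.1 x.2 π ^ 2 * g (permSum c (π * pairPerm x.1 x.2 y.1 y.2))
          - swapDiff c x.1 x.2 π * (f (permSum c π) - f (permSum c π - swapDiff c x.1 x.2 π)) := by
    simp only [permMean_sub (F := fun π : Perm α => _ * g _), Finset.sum_sub_distrib,
      Finset.sum_const, nsmul_eq_mul, hcard]
    rw [Finset.sum_congr rfl hg, ← Finset.mul_sum, ← Finset.mul_sum, hsq, hst]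
    ring
  have hcell : ∀ i j p q : α, i ≠ j →
      |permMean (fun π => swapDiff c i j π ^ 2 * g (permSum c (π * pairPerm i j p q))
        - swapDiff c i j π * (f (permSum c π) - f (permSum c π - swapDiff c i j π)))|
      ≤ K / n * (208 / 3 * (∑ y, |c i y| ^ 3 + ∑ y, |c j y| ^ 3)
          + 32 / 3 * (∑ y, |c p y| ^ 3 + ∑ y, |c q y| ^ 3)) := fun i j p q hij =>
    abs_permMean_local_le hij hf hK0 (hK {i, j, p, q} Finset.card_le_four ⟨i, by simp⟩)
  have hsum : |4 * n * (n * (n - 1)) * (permMean (fun π => g (permSum c π))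
        - permMean fun π => permSum c π * f (permSum c π))|
      ≤ K / n * (2 * (208 / 3 + 32 / 3) * n ^ 3 * ∑ x, ∑ y, |c x y| ^ 3) := by
    rw [hid]
    refine (Finset.abs_sum_le_sum_abs _ _).trans ?_
    refine (Finset.sum_le_sum fun x hx => (Finset.abs_sum_le_sum_abs _ _).trans
      (Finset.sum_le_sum fun y _ => hcell x.1 x.2 y.1 y.2 (Finset.mem_offDiag.mp hx).2.2)).trans ?_
    simp only [← Finset.mul_sum]
    exact mul_le_mul_of_nonneg_left (sum_offDiag_sum_offDiag_le
      (r := fun x => ∑ y, |c x y| ^ 3) (fun x => Finset.sum_nonneg fun y _ => by positivity)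
      (by norm_num) (by norm_num)) (div_nonneg hK0 (by linarith))
  have hpos : 0 < 4 * n * (n * (n - 1)) := by
    have : 0 < n - 1 := by linarith
    positivity
  rw [abs_mul, abs_of_pos hpos] at hsum
  rw [le_div_iff₀ (by linarith), ← mul_le_mul_iff_right₀ (show 0 < 4 * n ^ 2 by positivity)]
  refine le_trans (le_of_eq ?_) (hsum.trans (le_of_eq ?_))
  · ring
  · field_simp
    ring

variable {α : Type} [Fintype α] [DecidableEq α] {c : α → α → ℝ}

theorem sum_abs_cube_pos (hQ : 0 < ∑ x, ∑ y, c x y ^ 2) : 0 < ∑ x, ∑ y, |c x y| ^ 3 := by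
  refine lt_of_le_of_ne (by positivity) fun h => hQ.ne' ?_
  refine Finset.sum_eq_zero fun x hx => Finset.sum_eq_zero fun y hy => ?_
  have h1 := (Finset.sum_eq_zero_iff_of_nonneg fun x _ =>
    Finset.sum_nonneg fun y _ => by positivity).mp h.symm x hx
  have h2 := (Finset.sum_eq_zero_iff_of_nonneg fun y _ => by positivity).mp h1 y hy
  simpa using h2

theorem IsCentered.comp_perm (hc : IsCentered c) (π : Perm α) : IsCentered fun x y => c x (π y) :=
  ⟨fun x => by rw [sum_apply_perm π (c x), hc.row], fun y => hc.col (π y)⟩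

theorem abs_permMean_ramp_sub_integral_le (hc : IsCentered c) (hn : 2 ≤ Fintype.card α)
    (hQ : ∑ x, ∑ y, c x y ^ 2 = Fintype.card α - 1)
    (hβ : ∑ x, ∑ y, |c x y| ^ 3 ≤ Fintype.card α / 451)
    (hK : ∀ A : Finset α, A.Nonempty → 2 ≤ Fintype.card {x // x ∉ A} →
      HasKolmogorovBound {x // x ∉ A}) {L : ℝ}
    (hL : L = (∑ x, ∑ y, |c x y| ^ 3) / Fintype.card α) (hL0 : 0 < L) (z : ℝ) :
    |permMean (fun π => ramp z (330 * L) (permSum c π))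
      - ∫ x, ramp z (330 * L) x ∂gaussianReal 0 1| ≤ 303 * L := by
  have hl : 0 < 330 * L := by linarith
  have hn1 := card_ge_of_sum_cube_le hn hQ hβ
  obtain ⟨f, g, hf, hg, hf0, hg2⟩ := exists_stein_solution (continuous_ramp z (330 * L))
    (ramp_nonneg z (330 * L)) (ramp_le_one z (330 * L))
  have hpi : √(Real.pi / 2) ≤ 1.2534 := by
    rw [Real.sqrt_le_left (by norm_num)]
    have := Real.pi_lt_d4
    norm_num at this ⊢
    linarith
  have hB : 902 * 1.4 * L / (330 * L) ≤ 3.827 := by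
    rw [div_le_iff₀ hl]
    norm_num
    linarith
  have hmain := abs_permMean_stein_le hc hn hQ hf (K := 7.571) (by norm_num)
    fun A hA hne π a => by
      have hcd := hc.comp_perm π
      have hQd : ∑ x, ∑ y, c x (π y) ^ 2 = Fintype.card α - 1 := by
        rw [← hQ]
        exact Finset.sum_congr rfl fun x _ => sum_apply_perm π fun y => c x y ^ 2
      have hβd : ∑ x, ∑ y, |c x (π y)| ^ 3 = ∑ x, ∑ y, |c x y| ^ 3 :=
        Finset.sum_congr rfl fun x _ => sum_apply_perm π fun y => |c x y| ^ 3
      have hm : 2 ≤ Fintype.card {x // x ∉ A} := by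
        have : (2 : ℝ) ≤ Fintype.card {x // x ∉ A} := by
          linarith [card_sub_four_le_card_subtype hA]
        exact_mod_cast this
      have hS := isSpread_permSum_restrict hcd hQd (by rwa [hβd]) hn1 hA hne (hK A hne hm)
      rw [hβd, ← hL] at hS
      have hmom := permMean_abs_permSum_restrict_le hcd hQd hn1 hA
      refine (abs_permMean_stein_deriv_sub_le hS hl hf hg hf0 hg2 a).trans
        (mul_le_mul_of_nonneg_left ?_ (abs_nonneg a))
      norm_num at hpi hB hmom ⊢
      linarith
  have hgW : permMean (fun π => g (permSum c π)) - permMean (fun π => permSum c π * f (permSum c π))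
      = permMean (fun π => ramp z (330 * L) (permSum c π))
        - ∫ x, ramp z (330 * L) x ∂gaussianReal 0 1 := by
    simp only [hg]
    rw [permMean_add, permMean_sub, permMean_const]
    ring
  rw [hgW] at hmain
  refine hmain.trans ?_
  have hβL : ∑ x, ∑ y, |c x y| ^ 3 = L * Fintype.card α := by
    rw [hL, div_mul_cancel₀ _ (by linarith)]
  rw [hβL, div_le_iff₀ (by linarith)]
  norm_num
  nlinarith

theorem hasKolmogorovBound_of_subtype (hn : 2 ≤ Fintype.card α)
    (hK : ∀ A : Finset α, A.Nonempty → 2 ≤ Fintype.card {x // x ∉ A} →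
      HasKolmogorovBound {x // x ∉ A}) :
    HasKolmogorovBound α := by
  intro c hc hQ z
  have hn2 : (2 : ℝ) ≤ Fintype.card α := by exact_mod_cast hn
  have hβ0 := sum_abs_cube_pos (by rw [hQ]; linarith : 0 < ∑ x, ∑ y, c x y ^ 2)
  rw [div_mul_eq_mul_div, mul_div_assoc]
  set L := (∑ x, ∑ y, |c x y| ^ 3) / Fintype.card α with hL
  have hL0 : 0 < L := div_pos hβ0 (by linarith)
  rcases le_or_gt ((Fintype.card α : ℝ) / 451) (∑ x, ∑ y, |c x y| ^ 3) with hβ | hβ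
  · have h1 : 1 ≤ 451 * L := by
      rw [hL, ← mul_div_assoc, le_div_iff₀ (by linarith)]
      linarith
    have h2 : 0 ≤ permMean (fun ρ => if permSum c ρ ≤ z then 1 else 0) :=
      permMean_nonneg fun ρ => by split_ifs <;> norm_num
    have h3 : permMean (fun ρ => if permSum c ρ ≤ z then 1 else 0) ≤ 1 :=
      (permMean_mono fun ρ => by split_ifs <;> norm_num).trans (permMean_const (α := α) 1).le
    rw [abs_le]
    constructor <;> linarith [stdNormalCDF_nonneg z, stdNormalCDF_le_one z]
  have hl : 0 < 330 * L := by linarith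
  have hb := abs_permMean_ramp_sub_integral_le hc hn hQ hβ.le hK hL hL0
  have hu := abs_le.mp (hb z)
  have hd := abs_le.mp (hb (z - 330 * L))
  have hu1 : permMean (fun ρ => if permSum c ρ ≤ z then 1 else 0)
      ≤ permMean fun ρ => ramp z (330 * L) (permSum c ρ) := permMean_mono fun ρ => by
    split_ifs with h
    · rw [ramp_eq_one hl h]
    · exact ramp_nonneg _ _ _
  have hd1 : permMean (fun ρ => ramp (z - 330 * L) (330 * L) (permSum c ρ))
      ≤ permMean fun ρ => if permSum c ρ ≤ z then 1 else 0 := permMean_mono fun ρ => by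
    split_ifs with h
    · exact ramp_le_one _ _ _
    · rw [ramp_eq_zero hl (by linarith)]
  have hu2 := integral_gaussianReal_le_stdNormalCDF (continuous_ramp z (330 * L))
    (ramp_nonneg z (330 * L)) (ramp_le_one z (330 * L)) (b := z + 330 * L)
    fun x hx => ramp_eq_zero hl hx.le
  have hd2 := stdNormalCDF_le_integral_gaussianReal (continuous_ramp (z - 330 * L) (330 * L))
    (ramp_nonneg _ (330 * L)) (ramp_le_one _ (330 * L)) (a := z - 330 * L)
    fun x hx => ramp_eq_one hl hx
  have hu3 := stdNormalCDF_sub_le (a := z) (b := z + 330 * L) (by linarith)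
  have hd3 := stdNormalCDF_sub_le (a := z - 330 * L) (b := z) (by linarith)
  rw [abs_le]
  constructor <;> linarith

theorem hasKolmogorovBound (n : ℕ) : ∀ (α : Type) [Fintype α] [DecidableEq α],
    2 ≤ Fintype.card α → Fintype.card α = n → HasKolmogorovBound α := by
  induction n using Nat.strong_induction_on with
  | _ n ih =>
    intro α _ _ hn hα
    exact hasKolmogorovBound_of_subtype hn fun A hA hm =>
      ih _ (hα ▸ card_subtype_lt hA) _ hm rfl

end Induction

end CombinatorialCLT

/-- **Combinatorial CLT for deterministic arrays, third-moment bound.**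
For a real `n × n` array (`n ≥ 2`) with vanishing row and column sums, normalized so that
`(1/(n-1)) ∑ c² = 1`, the distribution of `W = ∑ i, c i (π i)` under the uniform random
permutation `π` satisfies `sup_z |P(W ≤ z) - Φ(z)| ≤ (451/n) ∑ |c|³`. The probability
`P(W ≤ z)` is expressed by counting permutations. -/
theorem combinatorial_clt_deterministic
    (n : ℕ) (hn : 2 ≤ n) (c : Fin n → Fin n → ℝ)
    (hrow : ∀ i, ∑ j, c i j = 0)
    (hcol : ∀ j, ∑ i, c i j = 0)
    (hnorm : (1 / ((n : ℝ) - 1)) * ∑ i, ∑ j, c i j ^ 2 = 1) :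
    ∀ z : ℝ,
      |((Finset.univ.filter
            (fun σ : Equiv.Perm (Fin n) => ∑ i, c i (σ i) ≤ z)).card : ℝ)
          / (n.factorial : ℝ) - stdNormalCDF z|
        ≤ (451 / (n : ℝ)) * ∑ i, ∑ j, |c i j| ^ 3 := by
  intro z
  have hn2 : (2 : ℝ) ≤ n := by exact_mod_cast hn
  have hQ : ∑ i, ∑ j, c i j ^ 2 = (Fintype.card (Fin n) : ℝ) - 1 := by
    rw [one_div, inv_mul_eq_one₀ (by linarith)] at hnorm
    rw [← hnorm, Fintype.card_fin]
  have h := hasKolmogorovBound n (Fin n) (by rwa [Fintype.card_fin]) (Fintype.card_fin n) c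
    ⟨hrow, hcol⟩ hQ z
  rw [Fintype.card_fin] at h
  rwa [permMean, Finset.sum_boole, Fintype.card_fin] at h
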